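/- arXiv:1602.03964 — 5 statements merged into one kernel-verified Lean document; each statement's English description precedes it below -/
import Mathlib

section
/- Let A be a complex unital semisimple Banach algebra and let B be a complex unital Banach algebra possessing a separating family of finite-dimensional irreducible representations (i.e., there is a family of continuous unital surjective algebra homomorphisms π_i : B → M_{n_i}(ℂ) whose kernels have trivial intersection). If T : A → B is a linear, unital, surjective map satisfying ρ(T(a)) = ρ(a) for every a ∈ A (where ρ denotes the spectral radius), then T is a Jordan morphism, i.e., T(a²) = T(a)² for all a ∈ A. -/
/-!
Let `φ = π_i ∘ T`, a surjection onto a full matrix algebra. Traces of powers of matrices are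
controlled by the spectral radius, so `a ↦ tr (φ a)` is dominated by the spectral radius and hence,
by Liouville's theorem along the conjugations `exp (t x) a exp (-t x)`, is a trace on `A`.

The substance is that `T` sees `a²` correctly under traces, by an argument in the style of Cartan's
uniqueness theorem. Up to an error of order `δ²`, the maps `x ↦ x - δ x²` and `x ↦ x + δ x²` are
inverse Möbius transformations between the disc of radius `R` about `0` and its translate by
`-δ R²`. By spectral mapping, applying the first in `A`, transporting by `T`, applying the second
in `B` and lifting back to `A` hardly increases the spectral radius, while it adds `δ z² q` to
the curve `z ↦ z a + …`, with `T q = (T a)² - T (a²)`. After `64 n²` iterations with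
`δ = 1 / (64 n)` the spectral radius has at most doubled but the coefficient of `z²` has become
`n q`. Cauchy's estimates for `tr φ` and `tr φ²` along this curve, as `n → ∞`, force
`tr (φ q) = 0` and `tr (φ a φ q) = 0`. Polarizing these identities makes `φ (a²) - (φ a)²`
orthogonal to the whole matrix algebra for the trace form.
-/

open Polynomial Metric

section TraceForm

variable {K A m : Type*} [Field K] [CharZero K] [Ring A] [Algebra K A] [Fintype m] [DecidableEq m]

theorem map_sq_eq_sq_of_trace_eq {φ : A →ₗ[K] Matrix m m K} (hφ : Function.Surjective φ)
    (hcomm : ∀ x y, (φ (x * y)).trace = (φ (y * x)).trace)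
    (hsq : ∀ a, (φ (a ^ 2)).trace = (φ a ^ 2).trace)
    (hcube : ∀ a, (φ a * φ (a ^ 2)).trace = (φ a ^ 3).trace) (a : A) :
    φ (a ^ 2) = φ a ^ 2 := by
  simp only [sq, pow_three'] at hsq hcube ⊢
  have hmul (x y : A) : (φ (x * y)).trace = (φ x * φ y).trace := by
    have hadd := hsq (x + y)
    simp only [add_mul, mul_add, map_add, Matrix.trace_add, hsq, hcomm y x,
      Matrix.trace_mul_comm (φ y) (φ x)] at hadd
    linear_combination hadd / 2
  have hleft (y : A) : (φ a * φ (a * y)).trace = (φ (a * a) * φ y).trace := by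
    rw [← hmul, ← mul_assoc, hmul]
  have hright (y : A) : (φ a * φ (y * a)).trace = (φ (a * a) * φ y).trace := by
    rw [← hmul, hcomm, mul_assoc, hmul, Matrix.trace_mul_comm]
  refine Matrix.ext_iff_trace_mul_right.mpr fun M => ?_
  obtain ⟨y, rfl⟩ := hφ M
  have hadd := hcube (a + y)
  have hsub := hcube (a - y)
  simp only [add_mul, mul_add, sub_mul, mul_sub, map_add, map_sub, Matrix.trace_add,
    Matrix.trace_sub, hcube, hleft, hright, Matrix.trace_mul_comm (φ y) (φ (a * a)),
    Matrix.trace_mul_cycle (φ a) (φ y) (φ a), Matrix.trace_mul_cycle (φ y) (φ a) (φ a)] at hadd hsub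
  linear_combination (hadd - hsub) / 6

end TraceForm

section ScalarEvaluation

variable {R A B : Type*} [CommSemiring R] [Semiring A] [Algebra R A] [Semiring B] [Algebra R B]

/-- Evaluation at a scalar of a polynomial over a possibly noncommutative algebra; it is
multiplicative because scalars are central. It turns a polynomial into a polynomial curve in `A`. -/
noncomputable def evalScalar (z : R) : A[X] →ₐ[R] A where
  __ := eval₂RingHom' (RingHom.id A) (algebraMap R A z) fun a => (Algebra.commutes z a).symm
  commutes' r := by simp [Polynomial.algebraMap_apply, eval₂RingHom']

/-- The coefficientwise action of a linear map on polynomials, that is, composition of a polynomial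
curve with a linear map. -/
noncomputable def mapCoeffs (f : A →ₗ[R] B) : A[X] →ₗ[R] B[X] :=
  lsum fun n => (monomial n).restrictScalars R ∘ₗ f

theorem evalScalar_eq_eval (z : R) (p : R[X]) : evalScalar z p = p.eval z := rfl

@[simp]
theorem evalScalar_monomial (z : R) (n : ℕ) (a : A) : evalScalar z (monomial n a) = z ^ n • a := by
  simp [evalScalar, eval₂RingHom', ← map_pow, ← Algebra.commutes, Algebra.smul_def]

@[simp]
theorem mapCoeffs_monomial (f : A →ₗ[R] B) (n : ℕ) (a : A) :
    mapCoeffs f (monomial n a) = monomial n (f a) := by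
  simp [mapCoeffs]

@[simp]
theorem coeff_mapCoeffs (f : A →ₗ[R] B) (p : A[X]) (n : ℕ) :
    (mapCoeffs f p).coeff n = f (p.coeff n) := by
  induction p using Polynomial.induction_on' with
  | add p q hp hq => simp [hp, hq]
  | monomial k a => simp [coeff_monomial, apply_ite f]

@[simp]
theorem evalScalar_mapCoeffs (f : A →ₗ[R] B) (z : R) (p : A[X]) :
    evalScalar z (mapCoeffs f p) = f (evalScalar z p) := by
  induction p using Polynomial.induction_on' with
  | add p q hp hq => simp [hp, hq]
  | monomial k a => simp

end ScalarEvaluation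

/-- The polynomial has the form `a X + b X² + O(X³)`: its `2`-jet at the origin, where it
vanishes. -/
structure HasTwoJet {A : Type*} [Semiring A] (p : A[X]) (a b : A) : Prop where
  coeff_zero : p.coeff 0 = 0
  coeff_one : p.coeff 1 = a
  coeff_two : p.coeff 2 = b

namespace HasTwoJet

section Semiring

variable {R A B : Type*} [CommSemiring R] [Semiring A] [Algebra R A] [Semiring B] [Algebra R B]
  {p q : A[X]} {a b c d : A}

theorem monomial_one (a : A) : HasTwoJet (monomial 1 a) a 0 :=
  ⟨by simp, by simp, by simp [coeff_monomial]⟩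

theorem add (hp : HasTwoJet p a b) (hq : HasTwoJet q c d) : HasTwoJet (p + q) (a + c) (b + d) :=
  ⟨by simp [hp.coeff_zero, hq.coeff_zero], by simp [hp.coeff_one, hq.coeff_one],
    by simp [hp.coeff_two, hq.coeff_two]⟩

theorem mapCoeffs (hp : HasTwoJet p a b) (f : A →ₗ[R] B) :
    HasTwoJet (mapCoeffs f p) (f a) (f b) :=
  ⟨by simp [hp.coeff_zero], by simp [hp.coeff_one], by simp [hp.coeff_two]⟩

theorem smul (hp : HasTwoJet p a b) (r : R) : HasTwoJet (r • p) (r • a) (r • b) :=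
  ⟨by simp [hp.coeff_zero], by simp [hp.coeff_one], by simp [hp.coeff_two]⟩

theorem sq (hp : HasTwoJet p a b) : HasTwoJet (p ^ 2) 0 (a ^ 2) := by
  constructor <;>
    simp [pow_two, coeff_mul, Finset.Nat.antidiagonal_succ, hp.coeff_zero, hp.coeff_one]

theorem coeff_three_sq (hp : HasTwoJet p a b) : (p ^ 2).coeff 3 = a * b + b * a := by
  simp [pow_two, coeff_mul, Finset.Nat.antidiagonal_succ, hp.coeff_zero, hp.coeff_one, hp.coeff_two]

end Semiring

theorem sub {A : Type*} [Ring A] {p q : A[X]} {a b c d : A} (hp : HasTwoJet p a b)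
    (hq : HasTwoJet q c d) : HasTwoJet (p - q) (a - c) (b - d) :=
  ⟨by simp [hp.coeff_zero, hq.coeff_zero], by simp [hp.coeff_one, hq.coeff_one],
    by simp [hp.coeff_two, hq.coeff_two]⟩

end HasTwoJet

section ComplexEstimates

theorem norm_coeff_le_of_forall_norm_eval_le {p : ℂ[X]} {r C : ℝ} (hr : 0 < r)
    (h : ∀ z : ℂ, ‖z‖ = r → ‖p.eval z‖ ≤ C) (n : ℕ) : ‖p.coeff n‖ ≤ C / r ^ n := by
  have hderiv (k : ℕ) : iteratedDeriv k (p.eval ·) = ((derivative^[k] p).eval ·) := by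
    induction k with
    | zero => simp
    | succ k ih =>
      ext z
      rw [iteratedDeriv_succ, ih, Polynomial.deriv, Function.iterate_succ_apply']
  have hcauchy := Complex.norm_iteratedDeriv_le_of_forall_mem_sphere_norm_le n hr
    (f := (p.eval ·)) (c := 0) p.differentiable.diffContOnCl fun z hz => h z (by simpa using hz)
  rw [hderiv] at hcauchy
  simp only [← coeff_zero_eq_eval_zero, coeff_iterate_derivative, zero_add,
    Nat.descFactorial_self, nsmul_eq_mul, norm_mul, Complex.norm_natCast, mul_div_assoc] at hcauchy
  exact le_of_mul_le_mul_left hcauchy (by positivity)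

theorem eq_zero_of_forall_norm_natCast_mul_le {x : ℂ} {C : ℝ}
    (h : ∀ n : ℕ, ‖(n : ℂ) * x‖ ≤ C) : x = 0 := by
  by_contra hx
  obtain ⟨n, hn⟩ := exists_lt_nsmul (norm_pos_iff.mpr hx) C
  exact hn.not_ge (by simpa using h n)

theorem eq_zero_of_hasDerivAt_of_bounded {g g' : ℂ → ℂ} (hg : ∀ t, HasDerivAt g (g' t) t)
    {C : ℝ} (hC : ∀ t, ‖g t‖ ≤ C) (t : ℂ) : g' t = 0 := by
  have hconst : g = fun _ => g 0 := funext fun t =>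
    Differentiable.apply_eq_apply_of_bounded (fun t => (hg t).differentiableAt)
      (isBounded_iff_forall_norm_le.mpr ⟨C, by rintro _ ⟨s, rfl⟩; exact hC s⟩) t 0
  rw [hconst] at hg
  exact (hg t).unique (hasDerivAt_const t _)

variable {δ R : ℝ} {z : ℂ}

theorem norm_sub_mul_sq_add_le (hδ : 0 ≤ δ) (hδR : 2 * δ * R ≤ 1) (hz : ‖z‖ ≤ R) :
    ‖z - δ * z ^ 2 + δ * R ^ 2‖ ≤ R + 2 * δ ^ 2 * R ^ 3 := by
  have hR : 0 ≤ R := (norm_nonneg z).trans hz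
  have hz2 : ‖z‖ ^ 2 ≤ R ^ 2 := by gcongr
  have hexpand : ‖z - δ * z ^ 2 + δ * R ^ 2‖ ^ 2 =
      ‖z‖ ^ 2 + 2 * δ * z.re * (R ^ 2 - ‖z‖ ^ 2) + δ ^ 2 * ‖R ^ 2 - z ^ 2‖ ^ 2 := by
    simp only [Complex.sq_norm, Complex.normSq_apply]
    simp only [pow_two, Complex.add_re, Complex.sub_re, Complex.mul_re, Complex.ofReal_re,
      Complex.ofReal_im, Complex.add_im, Complex.sub_im, Complex.mul_im]
    ring
  have hlinear : 2 * δ * z.re * (R ^ 2 - ‖z‖ ^ 2) ≤ R ^ 2 - ‖z‖ ^ 2 := by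
    refine mul_le_of_le_one_left (sub_nonneg.mpr hz2) (le_trans ?_ hδR)
    gcongr
    exact z.re_le_norm.trans hz
  have hquad : ‖(R : ℂ) ^ 2 - z ^ 2‖ ≤ 2 * R ^ 2 := by
    calc ‖(R : ℂ) ^ 2 - z ^ 2‖ ≤ ‖(R : ℂ) ^ 2‖ + ‖z ^ 2‖ := norm_sub_le _ _
      _ = R ^ 2 + ‖z‖ ^ 2 := by simp
      _ ≤ 2 * R ^ 2 := by linarith
  refine le_of_sq_le_sq ?_ (by positivity)
  calc ‖z - δ * z ^ 2 + δ * R ^ 2‖ ^ 2 ≤ R ^ 2 + δ ^ 2 * (2 * R ^ 2) ^ 2 := by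
        rw [hexpand]; gcongr ?_ + δ ^ 2 * ?_ ^ 2; linarith
    _ ≤ (R + 2 * δ ^ 2 * R ^ 3) ^ 2 := by nlinarith [sq_nonneg (2 * δ ^ 2 * R ^ 3)]

theorem norm_add_mul_sq_le (hδ : 0 ≤ δ) (hδ' : δ ≤ 1 / 64) (hR : 0 ≤ R) (hR' : R ≤ 2)
    (hz : ‖z + δ * R ^ 2‖ ≤ R + 2 * δ ^ 2 * R ^ 3) : ‖z + δ * z ^ 2‖ ≤ R + 64 * δ ^ 2 := by
  set r := R + 2 * δ ^ 2 * R ^ 3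
  set w := z + δ * R ^ 2 with hw
  have hR3 : R ^ 3 ≤ 8 := (pow_le_pow_left₀ hR hR' 3).trans_eq (by norm_num)
  have hRr : R ≤ r := le_add_of_nonneg_right (by positivity)
  have hr : r ≤ R + 16 * δ ^ 2 := by simp only [r]; nlinarith
  have hr2 : r ≤ 2.1 := by nlinarith
  have hr3 : r ^ 3 ≤ 10 := (pow_le_pow_left₀ (hR.trans hRr) hr2 3).trans (by norm_num)
  have hdisc : ‖w + δ * w ^ 2 - δ * r ^ 2‖ ≤ r + 2 * δ ^ 2 * r ^ 3 := by
    have := norm_sub_mul_sq_add_le hδ (by nlinarith) ((norm_neg w).trans_le hz)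
    rwa [← norm_neg, show -(w + δ * w ^ 2 - δ * r ^ 2) = -w - δ * (-w) ^ 2 + δ * r ^ 2 by ring]
  have hsplit : z + δ * z ^ 2 = (w + δ * w ^ 2 - δ * r ^ 2) +
      ((δ * (r ^ 2 - R ^ 2) : ℝ) - (2 * δ ^ 2 * R ^ 2 : ℝ) * w + (δ ^ 3 * R ^ 4 : ℝ)) := by
    rw [hw]; push_cast; ring
  have hrad : ‖((δ * (r ^ 2 - R ^ 2) : ℝ) : ℂ)‖ ≤ 2 * δ ^ 2 := by
    rw [Complex.norm_of_nonneg (mul_nonneg hδ (by nlinarith))]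
    calc δ * (r ^ 2 - R ^ 2) ≤ 1 / 64 * (66 * δ ^ 2) := by gcongr <;> nlinarith
      _ ≤ 2 * δ ^ 2 := by nlinarith
  have hlin : ‖((2 * δ ^ 2 * R ^ 2 : ℝ) : ℂ) * w‖ ≤ 17 * δ ^ 2 := by
    rw [norm_mul, Complex.norm_of_nonneg (by positivity)]
    calc 2 * δ ^ 2 * R ^ 2 * ‖w‖ ≤ 2 * δ ^ 2 * 2 ^ 2 * 2.1 := by gcongr; exact hz.trans hr2
      _ ≤ 17 * δ ^ 2 := by nlinarith
  have hcub : ‖((δ ^ 3 * R ^ 4 : ℝ) : ℂ)‖ ≤ δ ^ 2 := by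
    rw [Complex.norm_of_nonneg (by positivity)]
    calc δ ^ 3 * R ^ 4 = δ * δ ^ 2 * R ^ 4 := by ring
      _ ≤ 1 / 64 * δ ^ 2 * 2 ^ 4 := by gcongr
      _ ≤ δ ^ 2 := by nlinarith
  rw [hsplit]
  refine (norm_add_le_of_le hdisc
    (norm_add_le_of_le (norm_sub_le_of_le hrad hlin) hcub)).trans ?_
  nlinarith

end ComplexEstimates

section SpectralIsometry

variable {A B : Type*} [Ring A] [Algebra ℂ A] [Ring B] [Algebra ℂ B] {T : A →ₗ[ℂ] B}
  {S : B →ₗ[ℂ] A}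

theorem spectrum_add_smul_sq (a : A) (c : ℂ) :
    spectrum ℂ (a + c • a ^ 2) = (fun z => z + c * z ^ 2) '' spectrum ℂ a := by
  have hdeg : 0 < degree (X + C c * X ^ 2 : ℂ[X]) :=
    lt_of_lt_of_le (by norm_num) (le_degree_of_ne_zero (n := 1) (by simp [coeff_X_pow]))
  simpa [Algebra.smul_def] using spectrum.map_polynomial_aeval_of_degree_pos a _ hdeg

theorem spectrum_subset_closedBall_iff_spectralRadius_sub_le {a : A} {c : ℂ} {r : ℝ} (hr : 0 ≤ r) :
    spectrum ℂ a ⊆ closedBall c r ↔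
      spectralRadius ℂ (a - algebraMap ℂ A c) ≤ ENNReal.ofReal r := by
  rw [spectralRadius, ← spectrum.sub_singleton_eq, Set.sub_singleton, iSup₂_le_iff]
  simp [Set.subset_def, ← enorm_eq_nnnorm, ← ofReal_norm, ENNReal.ofReal_le_ofReal_iff hr,
    dist_eq_norm]

/-- Unital spectral isometries between complex algebras; the spectral radius is the supremum of the
moduli of the spectrum, with values in `ℝ≥0∞`, so no norm is involved. -/
structure IsUnitalSpectralIsometry (T : A →ₗ[ℂ] B) : Prop where
  map_one : T 1 = 1
  spectralRadius_map (a : A) : spectralRadius ℂ (T a) = spectralRadius ℂ a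

theorem IsUnitalSpectralIsometry.spectrum_map_subset_closedBall_iff
    (hT : IsUnitalSpectralIsometry T) {a : A} {c : ℂ} {r : ℝ} (hr : 0 ≤ r) :
    spectrum ℂ (T a) ⊆ closedBall c r ↔ spectrum ℂ a ⊆ closedBall c r := by
  rw [spectrum_subset_closedBall_iff_spectralRadius_sub_le hr,
    spectrum_subset_closedBall_iff_spectralRadius_sub_le hr, ← hT.spectralRadius_map, map_sub,
    Algebra.algebraMap_eq_smul_one, Algebra.algebraMap_eq_smul_one, map_smul, hT.map_one]

/-- One step of the Cartan-type iteration. If `S` is a right inverse of `T`, then its image under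
`T` is `y + δ y²` with `y = T (a - δ a²)`: an approximate Möbius transformation upstairs followed by
its approximate inverse downstairs. -/
def mobiusStep (T : A →ₗ[ℂ] B) (S : B →ₗ[ℂ] A) (δ : ℂ) (a : A) : A :=
  a - δ • a ^ 2 + δ • S (T (a - δ • a ^ 2) ^ 2)

theorem spectrum_mobiusStep_subset (hT : IsUnitalSpectralIsometry T)
    (hTS : T ∘ₗ S = LinearMap.id) {δ R : ℝ} (hδ : 0 ≤ δ) (hδ' : δ ≤ 1 / 64) (hR : 0 ≤ R)
    (hR' : R ≤ 2) {a : A} (ha : spectrum ℂ a ⊆ closedBall 0 R) :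
    spectrum ℂ (mobiusStep T S δ a) ⊆ closedBall 0 (R + 64 * δ ^ 2) := by
  have hleft : spectrum ℂ (T (a - (δ : ℂ) • a ^ 2)) ⊆
      closedBall (-(δ * R ^ 2)) (R + 2 * δ ^ 2 * R ^ 3) := by
    rw [hT.spectrum_map_subset_closedBall_iff (by positivity), sub_eq_add_neg, ← neg_smul,
      spectrum_add_smul_sq]
    rintro _ ⟨z, hz, rfl⟩
    simpa [dist_eq_norm, sub_eq_add_neg] using norm_sub_mul_sq_add_le hδ (by nlinarith)
      (mem_closedBall_zero_iff.mp (ha hz))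
  rw [← hT.spectrum_map_subset_closedBall_iff (by positivity), mobiusStep, map_add, map_smul,
    ← LinearMap.comp_apply, hTS, LinearMap.id_apply, spectrum_add_smul_sq]
  rintro _ ⟨z, hz, rfl⟩
  have hz' := hleft hz
  rw [mem_closedBall_iff_norm, sub_neg_eq_add] at hz'
  exact mem_closedBall_zero_iff.mpr (norm_add_mul_sq_le hδ hδ' hR hR' hz')

theorem evalScalar_mobiusStep (T : A →ₗ[ℂ] B) (S : B →ₗ[ℂ] A) (δ z : ℂ) (p : A[X]) :
    evalScalar z (mobiusStep (mapCoeffs T) (mapCoeffs S) δ p) =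
      mobiusStep T S δ (evalScalar z p) := by
  simp only [mobiusStep, map_add, map_sub, map_smul, map_pow, evalScalar_mapCoeffs]

theorem HasTwoJet.mobiusStep {p : A[X]} {a b : A} (hp : HasTwoJet p a b) (T : A →ₗ[ℂ] B)
    (S : B →ₗ[ℂ] A) (δ : ℂ) :
    HasTwoJet (mobiusStep (_root_.mapCoeffs T) (_root_.mapCoeffs S) δ p) a
      (b + δ • (S (T a ^ 2) - a ^ 2)) := by
  have hinner := hp.sub (hp.sq.smul δ)
  convert hinner.add (((hinner.mapCoeffs T).sq.mapCoeffs S).smul δ) using 1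
  · rfl
  · simp
  · simp only [smul_zero, sub_zero]
    module

theorem exists_hasTwoJet_of_mul_sq_le_one (hT : IsUnitalSpectralIsometry T)
    (hTS : T ∘ₗ S = LinearMap.id) (a : A) {δ : ℝ} (hδ : 0 ≤ δ) (hδ' : δ ≤ 1 / 64) (k : ℕ)
    (hk : 64 * k * δ ^ 2 ≤ 1) :
    ∃ p : A[X], HasTwoJet p a ((k * δ : ℂ) • (S (T a ^ 2) - a ^ 2)) ∧
      ∀ z : ℂ, spectrum ℂ (z • a) ⊆ closedBall 0 1 →
        spectrum ℂ (evalScalar z p) ⊆ closedBall 0 (1 + 64 * k * δ ^ 2) := by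
  induction k with
  | zero => exact ⟨monomial 1 a, by simpa using HasTwoJet.monomial_one a, by simp⟩
  | succ k ih =>
    push_cast at hk ⊢
    obtain ⟨p, hp, hball⟩ := ih (by nlinarith)
    refine ⟨mobiusStep (mapCoeffs T) (mapCoeffs S) δ p, ?_, fun z hz => ?_⟩
    · convert hp.mobiusStep T S δ using 1
      module
    · rw [evalScalar_mobiusStep]
      convert spectrum_mobiusStep_subset hT hTS hδ hδ' (by positivity) (by nlinarith)
        (hball z hz) using 2
      ring

theorem exists_hasTwoJet_natCast_smul (hT : IsUnitalSpectralIsometry T)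
    (hTS : T ∘ₗ S = LinearMap.id) (a : A) (n : ℕ) :
    ∃ p : A[X], HasTwoJet p a ((n : ℂ) • (S (T a ^ 2) - a ^ 2)) ∧
      ∀ z : ℂ, spectrum ℂ (z • a) ⊆ closedBall 0 1 →
        spectrum ℂ (evalScalar z p) ⊆ closedBall 0 2 := by
  rcases n.eq_zero_or_pos with rfl | hn
  · obtain ⟨p, hp, hball⟩ :=
      exists_hasTwoJet_of_mul_sq_le_one hT hTS a le_rfl (by norm_num) 0 (by simp)
    exact ⟨p, by simpa using hp, fun z hz =>
      (hball z hz).trans (closedBall_subset_closedBall (by norm_num))⟩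
  have hδ : (1 : ℝ) / (64 * n) ≤ 1 / 64 := by
    gcongr
    exact le_mul_of_one_le_right (by norm_num) (by exact_mod_cast hn)
  have hkδ : 64 * (64 * n ^ 2 : ℕ) * (1 / (64 * n) : ℝ) ^ 2 = 1 := by
    push_cast
    field_simp
  obtain ⟨p, hp, hball⟩ := exists_hasTwoJet_of_mul_sq_le_one hT hTS a (by positivity) hδ _ hkδ.le
  refine ⟨p, ?_, by rwa [hkδ, one_add_one_eq_two] at hball⟩
  convert hp using 2
  push_cast
  field_simp

end SpectralIsometry

section MatrixTrace

variable {m : Type*} [Fintype m] [DecidableEq m]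

theorem norm_trace_pow_le {M : Matrix m m ℂ} {r : ℝ} (hM : spectrum ℂ M ⊆ closedBall 0 r)
    {k : ℕ} (hk : 0 < k) : ‖(M ^ k).trace‖ ≤ Fintype.card m * r ^ k := by
  have hcard : ((M ^ k).charpoly.roots.map (‖·‖)).card = Fintype.card m := by
    rw [Multiset.card_map, ← (IsAlgClosed.splits _).natDegree_eq_card_roots,
      Matrix.charpoly_natDegree_eq_dim]
  rw [Matrix.trace_eq_sum_roots_charpoly, ← hcard, ← nsmul_eq_mul]
  refine (norm_multiset_sum_le _).trans (Multiset.sum_le_card_nsmul _ _ fun x hx => ?_)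
  obtain ⟨z, hz, rfl⟩ := Multiset.mem_map.mp hx
  have hz' : z ∈ spectrum ℂ (M ^ k) :=
    Matrix.mem_spectrum_iff_isRoot_charpoly.mpr (isRoot_of_mem_roots hz)
  rw [spectrum.map_pow_of_pos _ hk] at hz'
  obtain ⟨w, hw, rfl⟩ := hz'
  simpa using pow_le_pow_left₀ (norm_nonneg w) (mem_closedBall_zero_iff.mp (hM hw)) k

theorem norm_trace_coeff_pow_le {P : (Matrix m m ℂ)[X]} {r C : ℝ} (hr : 0 < r)
    (hP : ∀ z : ℂ, ‖z‖ = r → spectrum ℂ (evalScalar z P) ⊆ closedBall 0 C)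
    {k : ℕ} (hk : 0 < k) (n : ℕ) :
    ‖((P ^ k).coeff n).trace‖ ≤ Fintype.card m * C ^ k / r ^ n := by
  rw [← Matrix.traceLinearMap_apply m ℂ ℂ, ← coeff_mapCoeffs]
  refine norm_coeff_le_of_forall_norm_eval_le hr (fun z hz => ?_) n
  rw [← evalScalar_eq_eval, evalScalar_mapCoeffs, map_pow]
  exact norm_trace_pow_le (hP z hz) hk

end MatrixTrace

section BanachAlgebra

variable {A : Type*} [NormedRing A] [NormedAlgebra ℂ A] [CompleteSpace A]

theorem spectrum_subset_closedBall_norm_mul (a : A) :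
    spectrum ℂ a ⊆ closedBall 0 (‖a‖ * ‖(1 : A)‖) := fun _ hz =>
  mem_closedBall_zero_iff.mpr (spectrum.norm_le_norm_mul_of_mem hz)

theorem exists_pos_spectrum_smul_subset_closedBall (a : A) :
    ∃ r > 0, ∀ z : ℂ, ‖z‖ = r → spectrum ℂ (z • a) ⊆ closedBall 0 1 := by
  have hpos : 0 < ‖a‖ * ‖(1 : A)‖ + 1 := by positivity
  refine ⟨(‖a‖ * ‖(1 : A)‖ + 1)⁻¹, by positivity, fun z hz =>
    (spectrum_subset_closedBall_norm_mul _).trans (closedBall_subset_closedBall ?_)⟩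
  rw [norm_smul, hz, mul_assoc, inv_mul_le_one₀ hpos]
  linarith

theorem spectrum_exp_mul_mul_exp_neg (x a : A) :
    spectrum ℂ (NormedSpace.exp x * a * NormedSpace.exp (-x)) = spectrum ℂ a := by
  let _ : NormedAlgebra ℚ A := NormedAlgebra.restrictScalars ℚ ℂ A
  let u : Aˣ := ⟨NormedSpace.exp x, NormedSpace.exp (-x),
    by rw [← NormedSpace.exp_add_of_commute (Commute.refl x).neg_right]; simp,
    by rw [← NormedSpace.exp_add_of_commute (Commute.refl x).neg_left]; simp⟩
  exact spectrum.units_conjugate (u := u)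

theorem map_mul_comm_of_norm_le {τ : A →ₗ[ℂ] ℂ} {K : ℝ}
    (hτ : ∀ a r, 0 ≤ r → spectrum ℂ a ⊆ closedBall 0 r → ‖τ a‖ ≤ K * r) (x y : A) :
    τ (x * y) = τ (y * x) := by
  let τ' : A →L[ℂ] ℂ := τ.mkContinuous (K * ‖(1 : A)‖) fun a =>
    (hτ a _ (by positivity) (spectrum_subset_closedBall_norm_mul a)).trans_eq (by ring)
  have hderiv (t : ℂ) := τ'.hasFDerivAt.comp_hasDerivAt t <|
    ((hasDerivAt_exp_smul_const' (𝕂 := ℂ) x t).mul_const y).mul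
      (hasDerivAt_exp_smul_const (𝕂 := ℂ) (-x) t)
  have hspec (t : ℂ) : spectrum ℂ (NormedSpace.exp (t • x) * y * NormedSpace.exp (t • -x)) ⊆
      closedBall 0 (‖y‖ * ‖(1 : A)‖) := by
    rw [smul_neg, spectrum_exp_mul_mul_exp_neg]
    exact spectrum_subset_closedBall_norm_mul y
  have hzero := eq_zero_of_hasDerivAt_of_bounded hderiv
    (fun t => hτ _ _ (by positivity) (hspec t)) 0
  simpa [τ', sub_eq_zero, ← sub_eq_add_neg] using hzero

variable {B : Type*} [Ring B] [Algebra ℂ B] {T : A →ₗ[ℂ] B} {m : Type*} [Fintype m]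
  [DecidableEq m]

namespace IsUnitalSpectralIsometry

theorem trace_map_mul_comm (hT : IsUnitalSpectralIsometry T) (f : B →ₐ[ℂ] Matrix m m ℂ)
    (x y : A) : (f (T (x * y))).trace = (f (T (y * x))).trace := by
  refine map_mul_comm_of_norm_le (K := Fintype.card m)
    (τ := Matrix.traceLinearMap m ℂ ℂ ∘ₗ f.toLinearMap ∘ₗ T) (fun a r hr ha => ?_) x y
  simpa using norm_trace_pow_le ((AlgHom.spectrum_apply_subset f _).trans
    ((hT.spectrum_map_subset_closedBall_iff hr).mpr ha)) one_pos

theorem trace_map_sq_and_trace_map_mul_map_sq (hT : IsUnitalSpectralIsometry T)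
    (hTsurj : Function.Surjective T) (f : B →ₐ[ℂ] Matrix m m ℂ) (a : A) :
    (f (T (a ^ 2))).trace = (f (T a) ^ 2).trace ∧
      (f (T a) * f (T (a ^ 2))).trace = (f (T a) ^ 3).trace := by
  obtain ⟨S, hTS⟩ := T.exists_rightInverse_of_surjective (LinearMap.range_eq_top.mpr hTsurj)
  obtain ⟨r, hr, hball⟩ := exists_pos_spectrum_smul_subset_closedBall a
  choose p hp hp' using exists_hasTwoJet_natCast_smul hT hTS a
  let P (n : ℕ) : (Matrix m m ℂ)[X] := mapCoeffs (f.toLinearMap ∘ₗ T) (p n)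
  have hP (n : ℕ) (z : ℂ) (hz : ‖z‖ = r) : spectrum ℂ (evalScalar z (P n)) ⊆ closedBall 0 2 := by
    rw [evalScalar_mapCoeffs]
    exact (AlgHom.spectrum_apply_subset f _).trans
      ((hT.spectrum_map_subset_closedBall_iff zero_le_two).mpr (hp' n z (hball z hz)))
  have hjet (n : ℕ) : HasTwoJet (P n) (f (T a)) ((n : ℂ) • (f (T a) ^ 2 - f (T (a ^ 2)))) := by
    have hTS' (b : B) : T (S b) = b := LinearMap.congr_fun hTS b
    simpa [hTS'] using (hp n).mapCoeffs (f.toLinearMap ∘ₗ T)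
  have hsq : (f (T a) ^ 2 - f (T (a ^ 2))).trace = 0 :=
    eq_zero_of_forall_norm_natCast_mul_le fun n => by
      simpa only [pow_one, (hjet n).coeff_two, Matrix.trace_smul, smul_eq_mul]
        using norm_trace_coeff_pow_le hr (hP n) one_pos 2
  have hcube : 2 * (f (T a) * (f (T a) ^ 2 - f (T (a ^ 2)))).trace = 0 :=
    eq_zero_of_forall_norm_natCast_mul_le fun n => by
      convert norm_trace_coeff_pow_le hr (hP n) two_pos 3 using 2
      rw [(hjet n).coeff_three_sq, Matrix.trace_add, Matrix.trace_mul_comm (_ • _),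
        mul_smul_comm, Matrix.trace_smul, smul_eq_mul]
      ring
  rw [Matrix.trace_sub, sub_eq_zero] at hsq
  rw [mul_sub, ← pow_succ', Matrix.trace_sub, mul_eq_zero_iff_left two_ne_zero,
    sub_eq_zero] at hcube
  exact ⟨hsq.symm, hcube.symm⟩

theorem map_map_sq (hT : IsUnitalSpectralIsometry T) (hTsurj : Function.Surjective T)
    {f : B →ₐ[ℂ] Matrix m m ℂ} (hf : Function.Surjective f) (a : A) :
    f (T (a ^ 2)) = f (T a) ^ 2 :=
  map_sq_eq_sq_of_trace_eq (φ := f.toLinearMap ∘ₗ T) (hf.comp hTsurj) (hT.trace_map_mul_comm f)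
    (fun x => (hT.trace_map_sq_and_trace_map_mul_map_sq hTsurj f x).1)
    (fun x => (hT.trace_map_sq_and_trace_map_mul_map_sq hTsurj f x).2) a

end IsUnitalSpectralIsometry

end BanachAlgebra

theorem spectral_isometry_is_jordan_general
    {A B : Type*} [NormedRing A] [NormedAlgebra ℂ A] [CompleteSpace A] [Ring B] [Algebra ℂ B]
    {ι : Type*} {m : ι → Type*} [∀ i, Fintype (m i)] [∀ i, DecidableEq (m i)]
    (π : ∀ i, B →ₐ[ℂ] Matrix (m i) (m i) ℂ) (hπsurj : ∀ i, Function.Surjective (π i))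
    (hsep : ∀ b : B, (∀ i, π i b = 0) → b = 0)
    (T : A →ₗ[ℂ] B) (hTsurj : Function.Surjective T) (hT1 : T 1 = 1)
    (hρ : ∀ a : A, spectralRadius ℂ (T a) = spectralRadius ℂ a) (a : A) :
    T (a * a) = T a * T a := by
  have hT : IsUnitalSpectralIsometry T := ⟨hT1, hρ⟩
  refine sub_eq_zero.mp (hsep _ fun i => ?_)
  rw [← sq, ← sq, map_sub, hT.map_map_sq hTsurj (hπsurj i), map_pow, sub_self]

/-- Let `A` be a complex unital semisimple Banach algebra and `B` a complex
unital Banach algebra having a separating family of finite-dimensional irreducible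
representations. Any unital surjective linear spectral isometry `T : A → B` is a
Jordan morphism. -/
theorem spectral_isometry_is_jordan
    {A B : Type*} [NormedRing A] [NormedAlgebra ℂ A] [CompleteSpace A]
    [NormedRing B] [NormedAlgebra ℂ B] [CompleteSpace B]
    (hA : (⊥ : Ideal A).jacobson = ⊥)
    {ι : Type*} (n : ι → ℕ) (hn : ∀ i, 0 < n i)
    (π : ∀ i, B →ₐ[ℂ] Matrix (Fin (n i)) (Fin (n i)) ℂ)
    (hπcont : ∀ i, Continuous (π i))
    (hπsurj : ∀ i, Function.Surjective (π i))
    (hsep : ∀ b : B, (∀ i, π i b = 0) → b = 0)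
    (T : A →ₗ[ℂ] B) (hTsurj : Function.Surjective T) (hT1 : T 1 = 1)
    (hρ : ∀ a : A, spectralRadius ℂ (T a) = spectralRadius ℂ a) :
    ∀ a : A, T (a * a) = T a * T a :=
  spectral_isometry_is_jordan_general π hπsurj hsep T hTsurj hT1 hρ
end

section
/- Let A be a complex unital Banach algebra and let B be a complex unital Banach algebra possessing a separating family of finite-dimensional irreducible representations (i.e., there is a family of continuous unital surjective algebra homomorphisms π_i : B → M_{n_i}(ℂ) whose kernels have trivial intersection). If T : A → B is linear, surjective, T(1) = 1, and T(a) is invertible in B whenever a is invertible in A, then T is a Jordan morphism, i.e., T(a²) = T(a)² for all a ∈ A. -/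
/-!
It suffices to treat a unital linear map `S` from `A` onto a matrix algebra that preserves
invertibility. The reciprocals of the zeros of the polynomial `det S((1 + X a) ^ m)` are bounded by
the spectral radius of `a`, so the sum of their squares grows at most linearly in `m`. By Newton's
identity this sum equals `m ^ 2 tr (S(a) ^ 2 - S(a ^ 2)) + m tr S(a ^ 2)`, whence
`tr (S(a) ^ 2) = tr S(a ^ 2)`.

For invertible `u` the same identity holds for `x ↦ S(u)⁻¹ S(u x)`. Taking `u = 1 + t b`,
differentiating at `t = 0` and polarizing gives `tr (S(b) S(a ^ 2)) = tr (S(b) S(a) ^ 2)`. Since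
`S` is onto and the trace form is nondegenerate, `S(a ^ 2) = S(a) ^ 2`.
-/

open Polynomial Topology

section SecondPowerSum

/-- The sum `∑ zᵢ ^ 2` attached to a polynomial `∏ (1 - zᵢ X)`, expressed through the
coefficients by Newton's identity so that it makes sense over any ring, in particular for matrix
coefficients. Only meaningful when the constant coefficient is `1`. -/
def secondPowerSum {R : Type*} [Ring R] (p : R[X]) : R :=
  p.coeff 1 ^ 2 - 2 * p.coeff 2

theorem coeff_two_mul {R : Type*} [Semiring R] (p q : R[X]) :
    (p * q).coeff 2 = p.coeff 0 * q.coeff 2 + p.coeff 1 * q.coeff 1 + p.coeff 2 * q.coeff 0 := by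
  simp [coeff_mul, Finset.Nat.antidiagonal_succ, add_assoc]

theorem coeff_comp_neg_X {R : Type*} [Ring R] (p : R[X]) (k : ℕ) :
    (p.comp (-X)).coeff k = p.coeff k * (-1) ^ k := by
  simpa using comp_C_mul_X_coeff (p := p) (r := -1) (n := k)

theorem secondPowerSum_mul {R : Type*} [CommRing R] {p q : R[X]} (hp : p.coeff 0 = 1)
    (hq : q.coeff 0 = 1) : secondPowerSum (p * q) = secondPowerSum p + secondPowerSum q := by
  simp only [secondPowerSum, mul_coeff_one, coeff_two_mul, hp, hq]
  ring

theorem coeff_two_mul_comp_neg_X {R : Type*} [Ring R] {p : R[X]} (hp : p.coeff 0 = 1) :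
    (p * p.comp (-X)).coeff 2 = -secondPowerSum p := by
  simp only [secondPowerSum, coeff_two_mul, coeff_comp_neg_X, hp]
  noncomm_ring

theorem secondPowerSum_multiset_prod_one_sub {R : Type*} [CommRing R] (s : Multiset R) :
    secondPowerSum (s.map fun z => 1 - C z * X).prod = (s.map (· ^ 2)).sum := by
  induction s using Multiset.induction with
  | empty => simp [secondPowerSum, coeff_one]
  | cons z s ih =>
    have hlin : secondPowerSum (1 - C z * X) = z ^ 2 := by
      simp [secondPowerSum, coeff_one]
    have hconst : ((s.map fun z => 1 - C z * X).prod).coeff 0 = 1 := by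
      simp [coeff_zero_multiset_prod]
    rw [Multiset.map_cons, Multiset.prod_cons, secondPowerSum_mul (by simp) hconst, hlin, ih,
      Multiset.map_cons, Multiset.sum_cons]

theorem eq_prod_one_sub_inv_roots {K : Type*} [Field K] {p : K[X]} (hp : p.Splits)
    (h0 : p.coeff 0 = 1) : p = (p.roots.map fun z => 1 - C z⁻¹ * X).prod := by
  have hroots : ∀ z ∈ p.roots, z ≠ 0 := by
    rintro _ hz rfl
    have hroot := isRoot_of_mem_roots hz
    simp [IsRoot, ← coeff_zero_eq_eval_zero, h0] at hroot
  have hfactor : p.roots.map (fun z => X - C z) =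
      p.roots.map fun z => C (-z) * (1 - C z⁻¹ * X) := by
    refine Multiset.map_congr rfl fun z hz => ?_
    rw [mul_sub, ← mul_assoc, ← C_mul, neg_mul, mul_inv_cancel₀ (hroots z hz),
      mul_one, C_neg, C_neg, C_1, neg_one_mul, neg_sub_neg]
  have hconst : p.leadingCoeff * (p.roots.map fun z => -z).prod = 1 := by
    rw [← h0, coeff_zero_eq_eval_zero, hp.eval_eq_prod_roots]
    simp
  have hC : (p.roots.map fun z => C (-z)).prod = C (p.roots.map fun z => -z).prod := by
    rw [map_multiset_prod, Multiset.map_map, Function.comp_def]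
  conv_lhs => rw [hp.eq_prod_roots, hfactor, Multiset.prod_map_mul, ← mul_assoc, hC, ← C_mul,
    hconst, C_1, one_mul]

theorem secondPowerSum_eq_sum_inv_roots_sq {K : Type*} [Field K] {p : K[X]} (hp : p.Splits)
    (h0 : p.coeff 0 = 1) : secondPowerSum p = (p.roots.map fun z => z⁻¹ ^ 2).sum := by
  have hprod : p = ((p.roots.map (·⁻¹)).map fun z => 1 - C z * X).prod := by
    rw [Multiset.map_map]
    exact eq_prod_one_sub_inv_roots hp h0
  conv_lhs => rw [hprod, secondPowerSum_multiset_prod_one_sub, Multiset.map_map]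
  rfl

theorem norm_secondPowerSum_le {K : Type*} [NormedField K] {p : K[X]} {r : ℝ} (hp : p.Splits)
    (h0 : p.coeff 0 = 1) (hr : ∀ z, p.IsRoot z → ‖z⁻¹‖ ≤ r) :
    ‖secondPowerSum p‖ ≤ p.natDegree * r ^ 2 := by
  have hp0 : p ≠ 0 := by rintro rfl; simp at h0
  rw [secondPowerSum_eq_sum_inv_roots_sq hp h0, hp.natDegree_eq_card_roots, ← nsmul_eq_mul,
    ← Multiset.card_map (fun z => ‖z⁻¹ ^ 2‖)]
  refine (norm_multiset_sum_le _).trans ?_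
  rw [Multiset.map_map]
  refine Multiset.sum_le_card_nsmul _ _ fun y hy => ?_
  obtain ⟨z, hz, rfl⟩ := Multiset.mem_map.1 hy
  simp only [Function.comp_apply, norm_pow]
  gcongr
  exact hr z ((mem_roots hp0).1 hz)

end SecondPowerSum

section Determinant

variable {ν R : Type*} [Fintype ν] [DecidableEq ν] [CommRing R]

theorem natDegree_det_le (G : Matrix ν ν R[X]) {d : ℕ} (hG : ∀ i j, (G i j).natDegree ≤ d) :
    G.det.natDegree ≤ Fintype.card ν * d := by
  rw [Matrix.det_apply]
  refine natDegree_sum_le_of_forall_le _ _ fun σ _ => (natDegree_smul_le _ _).trans ?_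
  calc (∏ i, G (σ i) i).natDegree ≤ ∑ i, (G (σ i) i).natDegree := natDegree_prod_le _ _
    _ ≤ ∑ _i : ν, d := Finset.sum_le_sum fun i _ => hG _ _
    _ = Fintype.card ν * d := by simp

theorem natDegree_det_matPolyEquiv_symm_le (F : (Matrix ν ν R)[X]) :
    (matPolyEquiv.symm F).det.natDegree ≤ Fintype.card ν * F.natDegree := by
  refine natDegree_det_le _ fun i j => natDegree_le_iff_coeff_eq_zero.2 fun k hk => ?_
  rw [matPolyEquiv_symm_apply_coeff, coeff_eq_zero_of_natDegree_lt hk, Matrix.zero_apply]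

theorem eval_det_matPolyEquiv_symm (F : (Matrix ν ν R)[X]) (t : R) :
    (matPolyEquiv.symm F).det.eval t = (F.eval (algebraMap R (Matrix ν ν R) t)).det := by
  rw [eval_det, AlgEquiv.apply_symm_apply]
  rfl

theorem det_matPolyEquiv_symm_comp_neg_X (F : (Matrix ν ν R)[X]) :
    (matPolyEquiv.symm (F.comp (-X))).det = (matPolyEquiv.symm F).det.comp (-X) := by
  have hmap : matPolyEquiv.symm (F.comp (-X)) =
      (compRingHom (-X)).mapMatrix (matPolyEquiv.symm F) := by
    ext i j k
    rcases k.even_or_odd with hk | hk <;> simp [coeff_comp_neg_X, hk.neg_one_pow]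
  rw [hmap, ← RingHom.map_det, coe_compRingHom_apply]

theorem coeff_two_det_matPolyEquiv_symm {F : (Matrix ν ν R)[X]} (h0 : F.coeff 0 = 1)
    (h1 : F.coeff 1 = 0) : (matPolyEquiv.symm F).det.coeff 2 = (F.coeff 2).trace := by
  have hF : matPolyEquiv.symm F = 1 + (X ^ 2 : R[X]) • matPolyEquiv.symm F.divX.divX := by
    rw [← matPolyEquiv.symm_apply_apply (1 + _)]
    congr 1
    rw [map_add, map_one, matPolyEquiv_map_smul, AlgEquiv.apply_symm_apply]
    ext1 k
    rcases k with _ | _ | k <;> simp [coeff_X_pow_mul', coeff_one, h0, h1]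
  rw [hF, Matrix.det_one_add_smul, ← pow_mul, coeff_add, coeff_add, coeff_mul_X_pow',
    coeff_mul_X_pow']
  simp [Matrix.trace, coeff_one]

-- `F(X) F(-X)` has no linear term, so the coefficient of `X ^ 2` in its determinant is a trace.
theorem secondPowerSum_det_matPolyEquiv_symm {F : (Matrix ν ν R)[X]} (h0 : F.coeff 0 = 1) :
    secondPowerSum (matPolyEquiv.symm F).det = (secondPowerSum F).trace := by
  have hdet0 : (matPolyEquiv.symm F).det.coeff 0 = 1 := by
    rw [coeff_zero_eq_eval_zero, eval_det_matPolyEquiv_symm, map_zero, ← coeff_zero_eq_eval_zero,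
      h0, Matrix.det_one]
  have hprod0 : (F * F.comp (-X)).coeff 0 = 1 := by
    simp [mul_coeff_zero, coeff_comp_neg_X, h0]
  have hprod1 : (F * F.comp (-X)).coeff 1 = 0 := by
    simp [mul_coeff_one, coeff_comp_neg_X, h0]
  have h := coeff_two_det_matPolyEquiv_symm hprod0 hprod1
  rwa [map_mul, Matrix.det_mul, det_matPolyEquiv_symm_comp_neg_X, coeff_two_mul_comp_neg_X hdet0,
    coeff_two_mul_comp_neg_X h0, Matrix.trace_neg, neg_inj] at h

end Determinant

theorem eq_zero_of_norm_sq_nsmul_add_nsmul_le {E : Type*} [NormedAddCommGroup E] [NormedSpace ℝ E]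
    {x y : E} {K : ℝ} (h : ∀ m : ℕ, ‖m ^ 2 • x + m • y‖ ≤ m * K) : x = 0 := by
  by_contra hx
  obtain ⟨m, hm⟩ := exists_lt_nsmul (norm_pos_iff.2 hx) (max 0 (K + ‖y‖))
  rw [max_lt_iff] at hm
  have hm0 : 0 < (m : ℝ) := by
    rcases m.eq_zero_or_pos with rfl | hpos
    · simp at hm
    · exact_mod_cast hpos
  have hscaled : m * (m • ‖x‖) ≤ m * (K + ‖y‖) := by
    calc m * (m • ‖x‖) = ‖(m ^ 2 • x + m • y) - m • y‖ := by
          rw [add_sub_cancel_right, sq, mul_smul, RCLike.norm_nsmul ℝ, RCLike.norm_nsmul ℝ]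
          simp only [nsmul_eq_mul]
      _ ≤ m * K + m * ‖y‖ := (norm_sub_le _ _).trans (add_le_add (h m) norm_nsmul_le)
      _ = m * (K + ‖y‖) := by ring
  exact hm.2.not_ge (le_of_mul_le_mul_left hscaled hm0)

section BinomialImage

variable {R A M : Type*} [CommRing R] [Ring A] [Algebra R A] [Ring M] [Algebra R M]

/-- The polynomial `S ((1 + X a) ^ m)`, where the linear map `S` is applied to each coefficient. -/
noncomputable def binomialImage (S : A →ₗ[R] M) (a : A) (m : ℕ) : M[X] :=
  ∑ k ∈ Finset.range (m + 1), monomial k (m.choose k • S (a ^ k))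

theorem coeff_binomialImage (S : A →ₗ[R] M) (a : A) (m k : ℕ) :
    (binomialImage S a m).coeff k = m.choose k • S (a ^ k) := by
  simp only [binomialImage, finsetSum_coeff, coeff_monomial, Finset.sum_ite_eq',
    Finset.mem_range, ite_eq_left_iff, not_lt]
  intro h
  rw [Nat.choose_eq_zero_of_lt h, zero_smul]

theorem natDegree_binomialImage_le (S : A →ₗ[R] M) (a : A) (m : ℕ) :
    (binomialImage S a m).natDegree ≤ m := by
  refine natDegree_le_iff_coeff_eq_zero.2 fun k hk => ?_
  rw [coeff_binomialImage, Nat.choose_eq_zero_of_lt hk, zero_smul]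

theorem eval_binomialImage (S : A →ₗ[R] M) (a : A) (m : ℕ) (t : R) :
    (binomialImage S a m).eval (algebraMap R M t) = S ((1 + t • a) ^ m) := by
  rw [add_comm, (Commute.one_right (t • a)).add_pow, map_sum, binomialImage, eval_finsetSum]
  refine Finset.sum_congr rfl fun k _ => ?_
  rw [eval_monomial, ← map_pow, ← Algebra.commutes, ← Algebra.smul_def, one_pow, mul_one,
    _root_.smul_pow, ← nsmul_eq_mul', map_nsmul, map_smul, smul_comm]

theorem secondPowerSum_binomialImage (S : A →ₗ[R] M) (a : A) (m : ℕ) :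
    secondPowerSum (binomialImage S a m) =
      m ^ 2 • (S a * S a - S (a * a)) + m • S (a * a) := by
  have hchoose : m ^ 2 = 2 * m.choose 2 + m := by
    rw [Nat.choose_two_right, Nat.mul_div_cancel' (Nat.even_mul_pred_self m).two_dvd]
    rcases m with _ | m
    · rfl
    · rw [Nat.add_sub_cancel]; ring
  calc secondPowerSum (binomialImage S a m)
      = m ^ 2 • (S a * S a) - (2 * m.choose 2) • S (a * a) := by
        simp only [secondPowerSum, coeff_binomialImage, Nat.choose_one_right, pow_one, sq,
          smul_mul_smul_comm, mul_smul, two_mul, add_smul]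
    _ = m ^ 2 • (S a * S a - S (a * a)) + m • S (a * a) := by
        rw [smul_sub, hchoose, add_smul _ _ (S (a * a))]
        abel

end BinomialImage

section Spectrum

variable {K A : Type*} [NormedField K] [Ring A] [Algebra K A]

theorem norm_inv_le_of_not_isUnit_one_add_smul {a : A} {r : ℝ}
    (hr : ∀ z ∈ spectrum K a, ‖z‖ ≤ r) {t : K} (ht : ¬IsUnit (1 + t • a)) : ‖t⁻¹‖ ≤ r := by
  have ht0 : t ≠ 0 := by
    rintro rfl
    simp at ht
  rw [← norm_neg]
  refine hr _ fun hu => ht ?_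
  have hfactor : 1 + t • a = Units.mk0 (-t) (neg_ne_zero.2 ht0) • (algebraMap K A (-t⁻¹) - a) := by
    rw [Units.smul_mk0, smul_sub, Algebra.algebraMap_eq_smul_one, smul_smul, neg_mul_neg,
      mul_inv_cancel₀ ht0, one_smul, neg_smul, sub_neg_eq_add]
  exact hfactor ▸ hu.smul _

theorem eventually_isUnit_one_add_smul {a : A} (ha : Bornology.IsBounded (spectrum K a)) :
    ∀ᶠ t : K in 𝓝 0, IsUnit (1 + t • a) := by
  obtain ⟨r, hr⟩ := ha.exists_norm_le
  have hsmall : ∀ᶠ t : K in 𝓝 0, r * ‖t‖ < 1 :=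
    (show Continuous fun t : K => r * ‖t‖ by fun_prop).tendsto' 0 0 (by simp) |>.eventually_lt_const
      one_pos
  filter_upwards [hsmall] with t ht
  by_contra hu
  have ht0 : t ≠ 0 := by
    rintro rfl
    simp at hu
  have hle := norm_inv_le_of_not_isUnit_one_add_smul hr hu
  rw [norm_inv, inv_le_iff_one_le_mul₀ (norm_pos_iff.2 ht0)] at hle
  exact ht.not_ge hle

end Spectrum

theorem hasDerivAt_ringInverse_one_add_smul_mul {𝕜 M : Type*} [NontriviallyNormedField 𝕜]
    [NormedRing M] [HasSummableGeomSeries M] [NormedAlgebra 𝕜 M] (s v w : M) :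
    HasDerivAt (fun t : 𝕜 => Ring.inverse (1 + t • s) * (v + t • w)) (w - s * v) 0 := by
  have hline : ∀ y z : M, HasDerivAt (fun t : 𝕜 => y + t • z) z 0 := fun y z => by
    simpa using ((hasDerivAt_id (0 : 𝕜)).smul_const z).const_add y
  have hinv : HasDerivAt (fun t : 𝕜 => Ring.inverse (1 + t • s)) (-s) 0 := by
    have h := HasFDerivAt.comp_hasDerivAt_of_eq (0 : 𝕜)
      (hasFDerivAt_ringInverse (𝕜 := 𝕜) (1 : Mˣ)) (hline 1 s) (by simp)
    simpa [Function.comp_def] using h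
  simpa [sub_eq_neg_add] using hinv.fun_mul (hline v w)

open scoped Matrix.Norms.Operator in
theorem hasDerivAt_matrix_trace {𝕜 ν : Type*} [NontriviallyNormedField 𝕜] [Fintype ν]
    {f : 𝕜 → Matrix ν ν 𝕜} {f' : Matrix ν ν 𝕜} {t : 𝕜} (hf : HasDerivAt f f' t) :
    HasDerivAt (fun s => (f s).trace) f'.trace t :=
  let tr : Matrix ν ν 𝕜 →L[𝕜] 𝕜 :=
    ⟨Matrix.traceLinearMap ν 𝕜 𝕜, continuous_id.matrix_trace⟩
  tr.hasFDerivAt.comp_hasDerivAt t hf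

/-- A linear map between algebras that is unital and sends invertible elements to invertible
elements. -/
structure PreservesUnits {R A M : Type*} [CommRing R] [Ring A] [Algebra R A] [Ring M] [Algebra R M]
    (S : A →ₗ[R] M) : Prop where
  map_one : S 1 = 1
  isUnit_map {a : A} (ha : IsUnit a) : IsUnit (S a)

theorem PreservesUnits.translate {R A M : Type*} [CommRing R] [Ring A] [Algebra R A] [Ring M]
    [Algebra R M] {S : A →ₗ[R] M} (hS : PreservesUnits S) {u : A} (hu : IsUnit u) :
    PreservesUnits (LinearMap.mulLeft R (Ring.inverse (S u)) ∘ₗ S ∘ₗ LinearMap.mulLeft R u) where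
  map_one := by simpa using Ring.inverse_mul_cancel _ (hS.isUnit_map hu)
  isUnit_map ha := (hS.isUnit_map hu).ringInverse.mul (hS.isUnit_map (hu.mul ha))

theorem two_mul_trace_mul {R A ν : Type*} [CommRing R] [Ring A] [Algebra R A] [Fintype ν]
    {S : A →ₗ[R] Matrix ν ν R} (hS : ∀ a, (S a * S a).trace = (S (a * a)).trace) (a b : A) :
    2 * (S a * S b).trace = (S (a * b)).trace + (S (b * a)).trace := by
  have hab := hS (a + b)
  simp only [map_add, mul_add, add_mul, Matrix.trace_add] at hab
  linear_combination hab - hS a - hS b + Matrix.trace_mul_comm (S a) (S b)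

namespace PreservesUnits

variable {A ν : Type*} [Ring A] [Algebra ℂ A] [Fintype ν] [DecidableEq ν]
  {S : A →ₗ[ℂ] Matrix ν ν ℂ}

theorem norm_trace_secondPowerSum_le (hS : PreservesUnits S) {a : A} {r : ℝ}
    (hr : ∀ z ∈ spectrum ℂ a, ‖z‖ ≤ r) (m : ℕ) :
    ‖(secondPowerSum (binomialImage S a m)).trace‖ ≤ m * (Fintype.card ν * r ^ 2) := by
  set p := (matPolyEquiv.symm (binomialImage S a m)).det
  have hF0 : (binomialImage S a m).coeff 0 = 1 := by simp [coeff_binomialImage, hS.map_one]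
  have heval : ∀ t, p.eval t = (S ((1 + t • a) ^ m)).det := fun t => by
    rw [eval_det_matPolyEquiv_symm, eval_binomialImage]
  have hp0 : p.coeff 0 = 1 := by simp [coeff_zero_eq_eval_zero, heval, hS.map_one]
  have hroots : ∀ z, p.IsRoot z → ‖z⁻¹‖ ≤ r := fun z hz => by
    refine norm_inv_le_of_not_isUnit_one_add_smul hr fun hu => ?_
    have hdet := (Matrix.isUnit_iff_isUnit_det _).1 (hS.isUnit_map (hu.pow m))
    rw [← heval, hz] at hdet
    exact not_isUnit_zero hdet
  have hdeg : p.natDegree ≤ Fintype.card ν * m :=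
    (natDegree_det_matPolyEquiv_symm_le _).trans
      (Nat.mul_le_mul_left _ (natDegree_binomialImage_le S a m))
  calc ‖(secondPowerSum (binomialImage S a m)).trace‖
      = ‖secondPowerSum p‖ := by rw [secondPowerSum_det_matPolyEquiv_symm hF0]
    _ ≤ p.natDegree * r ^ 2 := norm_secondPowerSum_le (IsAlgClosed.splits p) hp0 hroots
    _ ≤ ↑(Fintype.card ν * m) * r ^ 2 := by gcongr
    _ = m * (Fintype.card ν * r ^ 2) := by push_cast; ring

theorem trace_mul_self (hS : PreservesUnits S) {a : A}
    (ha : Bornology.IsBounded (spectrum ℂ a)) : (S a * S a).trace = (S (a * a)).trace := by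
  obtain ⟨r, hr⟩ := ha.exists_norm_le
  refine sub_eq_zero.1 (eq_zero_of_norm_sq_nsmul_add_nsmul_le (y := (S (a * a)).trace)
    (K := Fintype.card ν * r ^ 2) fun m => ?_)
  have h := hS.norm_trace_secondPowerSum_le hr m
  rwa [secondPowerSum_binomialImage, Matrix.trace_add, Matrix.trace_smul, Matrix.trace_smul,
    Matrix.trace_sub] at h

open scoped Matrix.Norms.Operator in
theorem trace_variation (hS : PreservesUnits S)
    (hA : ∀ a : A, Bornology.IsBounded (spectrum ℂ a)) (a b : A) :
    2 * (S a * (S (b * a) - S b * S a)).trace = (S (b * (a * a)) - S b * S (a * a)).trace := by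
  set φ : A → ℂ → Matrix ν ν ℂ := fun x t => Ring.inverse (1 + t • S b) * (S x + t • S (b * x))
  have hφ : ∀ x, HasDerivAt (φ x) (S (b * x) - S b * S x) 0 := fun x =>
    hasDerivAt_ringInverse_one_add_smul_mul _ _ _
  have hφ0 : φ a 0 = S a := by simp [φ]
  have htrace : ∀ᶠ t in 𝓝 0, (φ a t * φ a t).trace = (φ (a * a) t).trace := by
    filter_upwards [eventually_isUnit_one_add_smul (hA b)] with t ht
    simpa [φ, add_mul, hS.map_one, mul_assoc] using (hS.translate ht).trace_mul_self (hA a)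
  have hleft := hasDerivAt_matrix_trace ((hφ a).fun_mul (hφ a))
  rw [hφ0, Matrix.trace_add, Matrix.trace_mul_comm _ (S a), ← two_mul] at hleft
  have hright := hasDerivAt_matrix_trace (hφ (a * a))
  exact hleft.unique (hright.congr_of_eventuallyEq htrace)

theorem four_mul_trace_mul_mul (hS : PreservesUnits S)
    (hA : ∀ a : A, Bornology.IsBounded (spectrum ℂ a)) (a b : A) :
    4 * (S b * S a * S a).trace =
      2 * (S (a * b * a)).trace + (S (b * a * a)).trace + (S (a * a * b)).trace := by
  have hvar := hS.trace_variation hA a b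
  have hpolar := two_mul_trace_mul fun c => hS.trace_mul_self (hA c)
  have h₁ := hpolar b (a * a)
  have h₂ := hpolar a (b * a)
  have hcycle : (S a * S b * S a).trace = (S b * S a * S a).trace := by
    rw [mul_assoc, Matrix.trace_mul_comm]
  simp only [mul_sub, Matrix.trace_sub, ← mul_assoc, hcycle] at hvar h₁ h₂
  linear_combination -2 * hvar + 2 * h₂ + h₁

theorem trace_mul_map_mul_self (hS : PreservesUnits S)
    (hA : ∀ a : A, Bornology.IsBounded (spectrum ℂ a)) (a b : A) :
    (S b * S (a * a)).trace = (S b * (S a * S a)).trace := by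
  have hcubic := hS.four_mul_trace_mul_mul hA
  -- The part of `hab` linear in `b` expresses `tr (S b * S a * S a)` in a second way, and comparing
  -- the two expressions eliminates `tr S (a * b * a)`.
  have hab := hcubic (a + b) a
  have hpolar := two_mul_trace_mul (fun c => hS.trace_mul_self (hA c)) b (a * a)
  have hcycle₁ : (S a * S b * S a).trace = (S b * S a * S a).trace := by
    rw [mul_assoc, Matrix.trace_mul_comm]
  have hcycle₂ : (S a * S a * S b).trace = (S b * S a * S a).trace := by
    rw [Matrix.trace_mul_comm, mul_assoc]
  simp only [map_add, mul_add, add_mul, Matrix.trace_add, hcycle₁, hcycle₂, ← mul_assoc]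
    at hab hpolar ⊢
  linear_combination (1 / 4 : ℂ) * (2 * hpolar + hcubic a b - (hab - hcubic a a - hcubic b a))

theorem map_mul_self_of_surjective (hS : PreservesUnits S)
    (hA : ∀ a : A, Bornology.IsBounded (spectrum ℂ a)) (hsurj : Function.Surjective S) (a : A) :
    S (a * a) = S a * S a := by
  refine Matrix.ext_iff_trace_mul_left.2 fun y => ?_
  obtain ⟨b, rfl⟩ := hsurj y
  exact hS.trace_mul_map_mul_self hA a b

end PreservesUnits

theorem invertibility_preserver_is_jordan_general {A B : Type*} [Ring A] [Algebra ℂ A]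
    [Ring B] [Algebra ℂ B] (hA : ∀ a : A, Bornology.IsBounded (spectrum ℂ a))
    {ι : Type*} {ν : ι → Type*} [∀ i, Fintype (ν i)] [∀ i, DecidableEq (ν i)]
    (π : ∀ i, B →ₐ[ℂ] Matrix (ν i) (ν i) ℂ) (hsep : ∀ b : B, (∀ i, π i b = 0) → b = 0)
    (T : A →ₗ[ℂ] B) (hsurj : ∀ i, Function.Surjective fun a => π i (T a)) (hT1 : T 1 = 1)
    (hinv : ∀ a : A, IsUnit a → IsUnit (T a)) (a : A) :
    T (a * a) = T a * T a := by
  refine sub_eq_zero.1 (hsep _ fun i => ?_)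
  have hS : PreservesUnits ((π i).toLinearMap ∘ₗ T) :=
    ⟨by simp [hT1], fun ha => (hinv _ ha).map (π i)⟩
  simpa [sub_eq_zero] using hS.map_mul_self_of_surjective hA (hsurj i) a

/-- Aupetit. Let `A` be a complex unital Banach algebra and `B` a complex
unital Banach algebra having a separating family of finite-dimensional irreducible
representations. Any unital surjective linear invertibility-preserving map `T : A → B`
is a Jordan morphism. -/
theorem invertibility_preserver_is_jordan
    {A B : Type*} [NormedRing A] [NormedAlgebra ℂ A] [CompleteSpace A]
    [NormedRing B] [NormedAlgebra ℂ B] [CompleteSpace B]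
    {ι : Type*} (n : ι → ℕ) (hn : ∀ i, 0 < n i)
    (π : ∀ i, B →ₐ[ℂ] Matrix (Fin (n i)) (Fin (n i)) ℂ)
    (hπcont : ∀ i, Continuous (π i))
    (hπsurj : ∀ i, Function.Surjective (π i))
    (hsep : ∀ b : B, (∀ i, π i b = 0) → b = 0)
    (T : A →ₗ[ℂ] B) (hTsurj : Function.Surjective T) (hT1 : T 1 = 1)
    (hinv : ∀ a : A, IsUnit a → IsUnit (T a)) :
    ∀ a : A, T (a * a) = T a * T a :=
  invertibility_preserver_is_jordan_general spectrum.isBounded π hsep T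
    (fun i => (hπsurj i).comp hTsurj) hT1 hinv
end

section
/- Let A and B be complex unital Banach algebras with B commutative, and let T : A → B be a unital, linear, bijective map satisfying ρ_B(T(a)) = ρ_A(a) for every a ∈ A. Then σ_B(T(a)) = σ_A(a) for all a ∈ A. -/
/-!
Call a linear functional `f` with `f 1 = 1` and `|f a| ≤ ρ(a)` for all `a` a *spectral state*. By
Liouville's theorem applied to `z ↦ f (exp (z a) x exp (-z a))`, every spectral state is a trace.
The characters of `B` are spectral states computing `ρ`, and composition with `T` identifies the
spectral states of `B` with those of `A`; hence the elements of `A` killed by all spectral states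
form a closed two-sided ideal of quasinilpotent elements with commutative quotient, and the
characters of `A` compute spectra just as those of `B` do.

By Hahn–Banach the spectral states are the weak-* closed convex hull of the characters, so by
Milman's theorem the extreme spectral states are characters. Composition with `T` preserves extreme
points, so every extreme spectral state of `B`, and by Krein–Milman every spectral state of `B`,
vanishes on `T (a b) - T a T b`. Therefore composition with `T` matches the characters of `B`
with those of `A`.
-/

open Set WeakDual

section Milman

variable {E : Type*} [AddCommGroup E] [Module ℝ E] [TopologicalSpace E]
  [IsTopologicalAddGroup E] [ContinuousSMul ℝ E]

theorem isCompact_convexJoin {s t : Set E} (hs : IsCompact s) (ht : IsCompact t) :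
    IsCompact (convexJoin ℝ s t) := by
  have h : convexJoin ℝ s t =
      (fun p : (E × E) × ℝ => p.1.1 + p.2 • (p.1.2 - p.1.1)) '' ((s ×ˢ t) ×ˢ Icc (0 : ℝ) 1) := by
    ext x
    simp only [mem_convexJoin, segment_eq_image', mem_image, mem_prod, Prod.exists]
    grind
  rw [h]
  exact ((hs.prod ht).prod isCompact_Icc).image (by fun_prop)

theorem isCompact_convexHull_union {s t : Set E} (hs : IsCompact s) (ht : IsCompact t)
    (hsc : Convex ℝ s) (htc : Convex ℝ t) : IsCompact (convexHull ℝ (s ∪ t)) := by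
  rcases s.eq_empty_or_nonempty with rfl | hs'
  · simpa [htc.convexHull_eq] using ht
  rcases t.eq_empty_or_nonempty with rfl | ht'
  · simpa [hsc.convexHull_eq] using hs
  rw [hsc.convexHull_union htc hs' ht']
  exact isCompact_convexJoin hs ht

variable [T2Space E] [LocallyConvexSpace ℝ E]

theorem exists_isCompact_convex_nhds_inter_subset_diff_singleton {K : Set E} (hK : IsCompact K)
    (hKc : Convex ℝ K) {x y : E} (hxy : x ≠ y) :
    ∃ U ∈ nhds y, ∃ C, IsCompact C ∧ Convex ℝ C ∧ C ⊆ K \ {x} ∧ K ∩ U ⊆ C := by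
  obtain ⟨l, hl⟩ := geometric_hahn_banach_point_point hxy
  obtain ⟨c, hxc, hcy⟩ := exists_between hl
  refine ⟨{z | c < l z}, (isOpen_lt continuous_const l.continuous).mem_nhds hcy,
    K ∩ {z | c ≤ l z}, hK.inter_right (isClosed_le continuous_const l.continuous),
    hKc.inter (convex_halfSpace_ge l.toLinearMap.isLinear c), ?_,
    inter_subset_inter_right K fun z (hz : c < l z) => hz.le⟩
  rintro z ⟨hzK, hcz : c ≤ l z⟩
  exact ⟨hzK, by rintro rfl; exact hxc.not_ge hcz⟩

/-- **Milman's theorem**, the partial converse of the Krein–Milman theorem. -/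
theorem extremePoints_subset_of_subset_closure_convexHull {K S : Set E} (hK : IsCompact K)
    (hKc : Convex ℝ K) (hS : IsCompact S) (hSK : S ⊆ K) (h : K ⊆ closure (convexHull ℝ S)) :
    K.extremePoints ℝ ⊆ S := by
  intro x hx
  by_contra hxS
  have hconv : Convex ℝ (K \ {x}) := (hKc.mem_extremePoints_iff_convex_sdiff.1 hx).2
  obtain ⟨C, hC, hCc, hCx, hSC⟩ :
      ∃ C, IsCompact C ∧ Convex ℝ C ∧ C ⊆ K \ {x} ∧ K ∩ S ⊆ C := by
    refine hS.induction_on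
      (p := fun s => ∃ C, IsCompact C ∧ Convex ℝ C ∧ C ⊆ K \ {x} ∧ K ∩ s ⊆ C)
      ⟨∅, isCompact_empty, convex_empty, empty_subset _, by simp⟩ ?_ ?_ ?_
    · rintro s t hst ⟨C, hC, hCc, hCx, htC⟩
      exact ⟨C, hC, hCc, hCx, (inter_subset_inter_right K hst).trans htC⟩
    · rintro s t ⟨C, hC, hCc, hCx, hsC⟩ ⟨D, hD, hDc, hDx, htD⟩
      refine ⟨convexHull ℝ (C ∪ D), isCompact_convexHull_union hC hD hCc hDc,
        convex_convexHull _ _, convexHull_min (union_subset hCx hDx) hconv, ?_⟩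
      rw [inter_union_distrib_left]
      exact (union_subset_union hsC htD).trans (subset_convexHull _ _)
    · intro y hy
      obtain ⟨U, hU, hUC⟩ := exists_isCompact_convex_nhds_inter_subset_diff_singleton hK hKc
        (ne_of_mem_of_not_mem hy hxS).symm
      exact ⟨U, mem_nhdsWithin_of_mem_nhds hU, hUC⟩
  have hKC : K ⊆ C := h.trans <|
    closure_minimal (convexHull_min (fun y hy => hSC ⟨hSK hy, hy⟩) hCc) hC.isClosed
  exact (hCx (hKC hx.1)).2 rfl

end Milman

theorem mem_closure_convexHull_of_forall_re_le {𝕜 E : Type*} [RCLike 𝕜] [AddCommGroup E]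
    [Module 𝕜 E] [Module ℝ E] [IsScalarTower ℝ 𝕜 E] [TopologicalSpace E] [IsTopologicalAddGroup E]
    [ContinuousSMul 𝕜 E] [LocallyConvexSpace ℝ E] {s : Set E} {x : E}
    (h : ∀ (l : StrongDual 𝕜 E) (c : ℝ), (∀ y ∈ s, RCLike.re (l y) ≤ c) → RCLike.re (l x) ≤ c) :
    x ∈ closure (convexHull ℝ s) := by
  have : ContinuousSMul ℝ E := IsScalarTower.continuousSMul 𝕜
  by_contra hx
  obtain ⟨l, c, hl, hc⟩ := RCLike.geometric_hahn_banach_closed_point (𝕜 := 𝕜)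
    (convex_convexHull ℝ s).closure isClosed_closure hx
  exact hc.not_ge (h l c fun y hy => (hl y (subset_closure (subset_convexHull ℝ s hy))).le)

section Quotient

variable {A : Type*} [NormedRing A] (I : Ideal A) [I.IsTwoSided] [IsClosed (I : Set A)]

/-- The quotient of a normed ring by a closed two-sided ideal, normed by the quotient norm.
Mathlib provides this structure for commutative rings only. -/
noncomputable abbrev quotientNormedRing : NormedRing (A ⧸ I) where
  __ := Submodule.Quotient.normedAddCommGroup I
  __ := Ideal.Quotient.ring I
  norm_mul_le x y := le_mul_of_forall_lt₀ fun r hr s hs => by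
    obtain ⟨a, rfl, ha⟩ := Submodule.Quotient.norm_mk_lt x (sub_pos.2 hr)
    obtain ⟨b, rfl, hb⟩ := Submodule.Quotient.norm_mk_lt y (sub_pos.2 hs)
    rw [add_sub_cancel] at ha hb
    calc _ ≤ ‖a * b‖ := Submodule.Quotient.norm_mk_le I (a * b)
      _ ≤ ‖a‖ * ‖b‖ := norm_mul_le a b
      _ ≤ r * s := by gcongr; exact (norm_nonneg a).trans ha.le

/-- The quotient of a normed ring by a closed two-sided ideal containing all commutators. -/
noncomputable abbrev quotientNormedCommRing (h : ∀ a b : A, a * b - b * a ∈ I) :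
    NormedCommRing (A ⧸ I) where
  __ := quotientNormedRing I
  mul_comm x y := by
    obtain ⟨a, rfl⟩ := Ideal.Quotient.mk_surjective x
    obtain ⟨b, rfl⟩ := Ideal.Quotient.mk_surjective y
    rw [← map_mul, ← map_mul]
    exact Ideal.Quotient.eq.2 (h a b)

theorem exists_character_of_mem_spectrum_quotient [NormedAlgebra ℂ A] [CompleteSpace A]
    (h : ∀ a b : A, a * b - b * a ∈ I) {a : A} {k : ℂ}
    (hk : k ∈ spectrum ℂ (Ideal.Quotient.mkₐ ℂ I a)) : ∃ φ : characterSpace ℂ A, φ a = k := by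
  let := quotientNormedCommRing I h
  let : NormedAlgebra ℂ (A ⧸ I) :=
    { Submodule.Quotient.normedSpace I ℂ, Ideal.Quotient.algebra ℂ with }
  have : CompleteSpace (A ⧸ I) := Submodule.Quotient.completeSpace I
  obtain ⟨φ, hφ⟩ := CharacterSpace.mem_spectrum_iff_exists.1 hk
  exact ⟨CharacterSpace.equivAlgHom.symm
    ((CharacterSpace.equivAlgHom φ).comp (Ideal.Quotient.mkₐ ℂ I)), hφ⟩

end Quotient

theorem isUnit_of_isUnit_mul_of_isUnit_mul {M : Type*} [Monoid M] {a b : M}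
    (hab : IsUnit (a * b)) (hba : IsUnit (b * a)) : IsUnit a := by
  obtain ⟨u, hu⟩ := hab
  obtain ⟨v, hv⟩ := hba
  refine isUnit_iff_exists_and_exists.2 ⟨⟨b * ↑u⁻¹, ?_⟩, ⟨↑v⁻¹ * b, ?_⟩⟩
  · rw [← mul_assoc, ← hu, u.mul_inv]
  · rw [mul_assoc, ← hv, v.inv_mul]

section SpectralRadius

/-- The spectral radius as a real number. -/
noncomputable def realSpectralRadius {A : Type*} [NormedRing A] [NormedAlgebra ℂ A] (a : A) : ℝ :=
  (spectralRadius ℂ a).toReal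

variable {A : Type*} [NormedRing A] [NormedAlgebra ℂ A]

theorem realSpectralRadius_nonneg (a : A) : 0 ≤ realSpectralRadius a := ENNReal.toReal_nonneg

theorem realSpectralRadius_units_conjugate (u : Aˣ) (a : A) :
    realSpectralRadius (u * a * ↑u⁻¹) = realSpectralRadius a := by
  simp only [realSpectralRadius, spectralRadius, spectrum.units_conjugate]

variable [CompleteSpace A]

theorem realSpectralRadius_le_iff {a : A} {c : ℝ} (hc : 0 ≤ c) :
    realSpectralRadius a ≤ c ↔ ∀ k ∈ spectrum ℂ a, ‖k‖ ≤ c := by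
  have hle {r : ℝ} (hr : 0 ≤ r) :
      spectralRadius ℂ a ≤ ENNReal.ofReal r ↔ ∀ k ∈ spectrum ℂ a, ‖k‖ ≤ r := by
    simp only [spectralRadius, iSup₂_le_iff, ← enorm_eq_nnnorm, ← ofReal_norm,
      ENNReal.ofReal_le_ofReal_iff hr]
  have hfin : spectralRadius ℂ a ≠ ⊤ := ne_top_of_le_ne_top ENNReal.ofReal_ne_top <|
    (hle (by positivity)).2 fun _ hk => spectrum.norm_le_norm_mul_of_mem hk
  rw [← hle hc, ENNReal.le_ofReal_iff_toReal_le hfin hc, realSpectralRadius]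

theorem norm_le_realSpectralRadius {a : A} {k : ℂ} (hk : k ∈ spectrum ℂ a) :
    ‖k‖ ≤ realSpectralRadius a :=
  (realSpectralRadius_le_iff (realSpectralRadius_nonneg a)).1 le_rfl k hk

theorem realSpectralRadius_le_norm_mul_norm_one (a : A) :
    realSpectralRadius a ≤ ‖a‖ * ‖(1 : A)‖ :=
  (realSpectralRadius_le_iff (by positivity)).2 fun _ hk => spectrum.norm_le_norm_mul_of_mem hk

theorem realSpectralRadius_sq_le (a : A) :
    realSpectralRadius (a ^ 2) ≤ realSpectralRadius a ^ 2 := by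
  refine (realSpectralRadius_le_iff (sq_nonneg _)).2 fun k hk => ?_
  rw [spectrum.map_pow_of_pos a two_pos] at hk
  obtain ⟨l, hl, rfl⟩ := hk
  rw [norm_pow]
  gcongr
  exact norm_le_realSpectralRadius hl

theorem isUnit_of_realSpectralRadius_sub_one_eq_zero {a : A} (h : realSpectralRadius (a - 1) = 0) :
    IsUnit a := by
  by_contra ha
  have hmem : (-1 : ℂ) ∈ spectrum ℂ (a - 1) := by
    rwa [spectrum.mem_iff, map_neg, map_one, show -1 - (a - 1) = -a by abel, IsUnit.neg_iff]
  have := norm_le_realSpectralRadius hmem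
  norm_num [h] at this

end SpectralRadius

section SpectralStates

variable {A : Type*} [NormedRing A] [NormedAlgebra ℂ A]

variable (A) in
/-- The spectral states of `A`: the functionals normalised at `1` and dominated by the spectral
radius. They are continuous automatically, and taken in the weak-* dual for its compactness. -/
def spectralStates : Set (WeakDual ℂ A) := {f | f 1 = 1 ∧ ∀ a, ‖f a‖ ≤ realSpectralRadius a}

theorem convex_spectralStates : Convex ℝ (spectralStates A) := by
  rintro f ⟨hf1, hf⟩ g ⟨hg1, hg⟩ s t hs ht hst
  refine ⟨?_, fun a => ?_⟩
  · change s • f 1 + t • g 1 = 1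
    rw [hf1, hg1, ← add_smul, hst, one_smul]
  · rw [← mem_closedBall_zero_iff]
    exact convex_closedBall 0 _ (mem_closedBall_zero_iff.2 (hf a))
      (mem_closedBall_zero_iff.2 (hg a)) hs ht hst

variable [CompleteSpace A]

theorem isCompact_spectralStates : IsCompact (spectralStates A) := by
  have hbound : spectralStates A ⊆ toStrongDual ⁻¹' Metric.closedBall 0 ‖(1 : A)‖ := by
    intro f hf
    rw [mem_preimage, mem_closedBall_zero_iff]
    refine ContinuousLinearMap.opNorm_le_bound _ (norm_nonneg _) fun a => ?_
    rw [mul_comm]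
    exact (hf.2 a).trans (realSpectralRadius_le_norm_mul_norm_one a)
  refine (isCompact_closedBall (𝕜 := ℂ) 0 ‖(1 : A)‖).of_isClosed_subset ?_ hbound
  simp only [spectralStates, ofPred_and, ofPred_forall]
  exact (isClosed_eq (eval_continuous 1) continuous_const).inter <|
    isClosed_iInter fun a => isClosed_le (eval_continuous a).norm continuous_const

theorem exists_mem_spectralStates_of_linearMap (g : A →ₗ[ℂ] ℂ) (hg1 : g 1 = 1)
    (hg : ∀ a, ‖g a‖ ≤ realSpectralRadius a) : ∃ f ∈ spectralStates A, ∀ a, f a = g a :=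
  ⟨StrongDual.toWeakDual <| g.mkContinuous ‖(1 : A)‖ fun a =>
      (hg a).trans ((realSpectralRadius_le_norm_mul_norm_one a).trans_eq (mul_comm _ _)),
    ⟨hg1, hg⟩, fun _ => rfl⟩

theorem characterSpace_subset_spectralStates : characterSpace ℂ A ⊆ spectralStates A := by
  intro φ hφ
  lift φ to characterSpace ℂ A using hφ
  exact ⟨map_one φ, fun a => norm_le_realSpectralRadius (CharacterSpace.apply_mem_spectrum φ a)⟩

theorem exists_mem_spectrum_norm_le {f : WeakDual ℂ A} (hf : f ∈ spectralStates A) (a : A) :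
    ∃ k ∈ spectrum ℂ a, ‖f a‖ ≤ ‖k‖ := by
  have : Nontrivial A := by
    refine nontrivial_of_ne 1 0 fun h => one_ne_zero (α := ℂ) ?_
    rw [← hf.1, h, map_zero]
  obtain ⟨k, hk, hka⟩ := spectrum.exists_nnnorm_eq_spectralRadius a
  refine ⟨k, hk, (hf.2 a).trans_eq ?_⟩
  simp [realSpectralRadius, ← hka]

theorem re_apply_le_of_forall_mem_spectrum {f : WeakDual ℂ A} (hf : f ∈ spectralStates A) {a : A}
    {c : ℝ} (hc : ∀ k ∈ spectrum ℂ a, k.re ≤ c) : (f a).re ≤ c := by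
  -- Compare the squared moduli of `f a + t` and of a spectral value of `a + t` as `t → ∞`.
  have hshift (t : ℝ) (ht : 0 ≤ t) : 2 * t * ((f a).re - c) ≤ realSpectralRadius a ^ 2 := by
    obtain ⟨k, hk, hle⟩ := exists_mem_spectrum_norm_le hf (algebraMap ℂ A t + a)
    obtain ⟨l, rfl⟩ : ∃ l, k = l + t := ⟨k - t, by ring⟩
    rw [spectrum.add_mem_add_iff] at hk
    rw [map_add, Algebra.algebraMap_eq_smul_one, map_smul, hf.1, smul_eq_mul, mul_one] at hle
    have hsq : ‖(t : ℂ) + f a‖ ^ 2 ≤ ‖l + t‖ ^ 2 := by gcongr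
    have hl : ‖l‖ ^ 2 ≤ realSpectralRadius a ^ 2 := by
      gcongr
      exact norm_le_realSpectralRadius hk
    simp only [Complex.sq_norm, Complex.normSq_apply, Complex.add_re, Complex.add_im,
      Complex.ofReal_re, Complex.ofReal_im, zero_add, add_zero] at hsq hl
    have hre : t * l.re ≤ t * c := by
      gcongr
      exact hc l hk
    nlinarith [sq_nonneg (f a).re, sq_nonneg (f a).im]
  by_contra! hlt
  have hpos : 0 < 2 * ((f a).re - c) := mul_pos two_pos (sub_pos.2 hlt)
  have := hshift ((realSpectralRadius a ^ 2 + 1) / (2 * ((f a).re - c)))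
    (div_nonneg (by positivity) hpos.le)
  field_simp at this
  linarith

/-- Liouville's theorem for `z ↦ f (exp (z a) x exp (-z a))`. -/
theorem spectralStates_map_mul_comm {f : WeakDual ℂ A} (hf : f ∈ spectralStates A) (a x : A) :
    f (a * x) = f (x * a) := by
  let F : ℂ → ℂ := fun z => f (NormedSpace.exp (z • a) * x * NormedSpace.exp (z • -a))
  have hF (z : ℂ) : HasDerivAt F (f (NormedSpace.exp (z • a) * a * x * NormedSpace.exp (z • -a) +
      NormedSpace.exp (z • a) * x * (NormedSpace.exp (z • -a) * -a))) z :=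
    (toStrongDual f).hasFDerivAt.comp_hasDerivAt z
      (((hasDerivAt_exp_smul_const a z).mul_const x).mul (hasDerivAt_exp_smul_const (-a) z))
  have hbdd : Bornology.IsBounded (range F) := by
    refine (Metric.isBounded_closedBall (x := (0 : ℂ)) (r := realSpectralRadius x)).subset ?_
    rintro _ ⟨z, rfl⟩
    have hinv (y : A) : NormedSpace.exp y * NormedSpace.exp (-y) = 1 := by
      let : NormedAlgebra ℚ A := NormedAlgebra.restrictScalars ℚ ℂ A
      rw [← NormedSpace.exp_add_of_commute (Commute.refl y).neg_right, add_neg_cancel,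
        NormedSpace.exp_zero]
    let u : Aˣ := ⟨NormedSpace.exp (z • a), NormedSpace.exp (-(z • a)), hinv _, by
      simpa using hinv (-(z • a))⟩
    simpa [F, u] using (hf.2 _).trans_eq (realSpectralRadius_units_conjugate u x)
  have hconst : F = fun _ => F 0 :=
    funext fun z => Differentiable.apply_eq_apply_of_bounded
      (fun z => (hF z).differentiableAt) hbdd z 0
  have hderiv := hF 0
  rw [hconst] at hderiv
  have hzero := hderiv.unique (hasDerivAt_const 0 (F 0))
  simp only [zero_smul, NormedSpace.exp_zero, one_mul, mul_one, mul_neg, ← sub_eq_add_neg,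
    map_sub] at hzero
  exact sub_eq_zero.1 hzero

end SpectralStates

section WeakDual

variable {E : Type*} [AddCommGroup E] [Module ℂ E] [TopologicalSpace E]

instance weakDual_isScalarTower_real : IsScalarTower ℝ ℂ (WeakDual ℂ E) :=
  inferInstanceAs (IsScalarTower ℝ ℂ (StrongDual ℂ E))

instance weakDual_locallyConvexSpace_real : LocallyConvexSpace ℝ (WeakDual ℂ E) :=
  inferInstanceAs (LocallyConvexSpace ℝ (WeakBilin _))

end WeakDual

section Norming

/-- The spectral radius of `A` is the supremum of the moduli of the spectral states. It is stated
through upper bounds so that it includes the zero algebra, which has no spectral states. -/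
def SpectralStatesNorming (A : Type*) [NormedRing A] [NormedAlgebra ℂ A] : Prop :=
  ∀ (a : A) (c : ℝ), 0 ≤ c → (∀ f ∈ spectralStates A, ‖f a‖ ≤ c) → realSpectralRadius a ≤ c

theorem spectralStatesNorming_of_commutative (B : Type*) [NormedCommRing B] [NormedAlgebra ℂ B]
    [CompleteSpace B] : SpectralStatesNorming B := by
  refine fun b c hc h => (realSpectralRadius_le_iff hc).2 fun k hk => ?_
  obtain ⟨φ, rfl⟩ := CharacterSpace.mem_spectrum_iff_exists.1 hk
  exact h φ (characterSpace_subset_spectralStates φ.2)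

variable {A : Type*} [NormedRing A] [NormedAlgebra ℂ A]

theorem SpectralStatesNorming.realSpectralRadius_eq_zero (h : SpectralStatesNorming A) {a : A}
    (ha : ∀ f ∈ spectralStates A, f a = 0) : realSpectralRadius a = 0 :=
  (h a 0 le_rfl fun f hf => by simp [ha f hf]).antisymm (realSpectralRadius_nonneg a)

variable [CompleteSpace A]

theorem SpectralStatesNorming.apply_mul_eq_zero (h : SpectralStatesNorming A) {b : A}
    (hb : ∀ f ∈ spectralStates A, f b = 0) {f : WeakDual ℂ A} (hf : f ∈ spectralStates A) (a : A) :
    f (a * b) = 0 := by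
  -- `z ↦ f ((a + z b) ^ 2)` is a bounded polynomial with linear coefficient `2 f (a b)`.
  let F : ℂ → ℂ := fun z => f ((a + z • b) ^ 2)
  have hdiff : Differentiable ℂ F := (toStrongDual f).differentiable.comp <|
    show Differentiable ℂ fun z : ℂ => (a + z • b) ^ 2 by fun_prop
  have hbdd : Bornology.IsBounded (range F) := by
    refine (Metric.isBounded_closedBall (x := (0 : ℂ)) (r := realSpectralRadius a ^ 2)).subset ?_
    rintro _ ⟨z, rfl⟩
    have hle : realSpectralRadius (a + z • b) ≤ realSpectralRadius a :=
      h _ _ (realSpectralRadius_nonneg a) fun g hg => by simpa [hb g hg] using hg.2 a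
    rw [mem_closedBall_zero_iff]
    calc ‖F z‖ ≤ realSpectralRadius ((a + z • b) ^ 2) := hf.2 _
      _ ≤ realSpectralRadius (a + z • b) ^ 2 := realSpectralRadius_sq_le _
      _ ≤ realSpectralRadius a ^ 2 := by gcongr; exact realSpectralRadius_nonneg _
  have hF : F 1 = F (-1) := hdiff.apply_eq_apply_of_bounded hbdd 1 (-1)
  simp only [F, one_smul, neg_smul, sq, add_mul, mul_add, neg_mul, mul_neg, map_add, map_neg,
    spectralStates_map_mul_comm hf b a] at hF
  linear_combination hF / 4

/-- The ideal of elements killed by all spectral states. -/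
def spectralStatesKernel (h : SpectralStatesNorming A) : Ideal A where
  carrier := {a | ∀ f ∈ spectralStates A, f a = 0}
  zero_mem' f _ := map_zero f
  add_mem' ha hb f hf := by rw [map_add, ha f hf, hb f hf, add_zero]
  smul_mem' a _ hb _ hf := h.apply_mul_eq_zero hb hf a

theorem isClosed_spectralStatesKernel (h : SpectralStatesNorming A) :
    IsClosed (spectralStatesKernel h : Set A) := by
  have hker : (spectralStatesKernel h : Set A) = ⋂ f ∈ spectralStates A, {a | f a = 0} := by
    ext a
    simp [spectralStatesKernel]
  rw [hker]
  exact isClosed_biInter fun f _ => isClosed_eq (toStrongDual f).continuous continuous_const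

theorem isTwoSided_spectralStatesKernel (h : SpectralStatesNorming A) :
    (spectralStatesKernel h).IsTwoSided :=
  ⟨fun {a} b ha f hf => by
    rw [spectralStates_map_mul_comm hf]
    exact h.apply_mul_eq_zero ha hf b⟩

theorem commutator_mem_spectralStatesKernel (h : SpectralStatesNorming A) (a b : A) :
    a * b - b * a ∈ spectralStatesKernel h := fun f hf => by
  rw [map_sub, spectralStates_map_mul_comm hf, sub_self]

theorem isUnit_of_isUnit_mk_spectralStatesKernel (h : SpectralStatesNorming A) {a : A}
    [(spectralStatesKernel h).IsTwoSided]
    (ha : IsUnit (Ideal.Quotient.mk (spectralStatesKernel h) a)) : IsUnit a := by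
  have hunit {c : A} (hc : Ideal.Quotient.mk (spectralStatesKernel h) c = 1) : IsUnit c :=
    isUnit_of_realSpectralRadius_sub_one_eq_zero <|
      h.realSpectralRadius_eq_zero (Ideal.Quotient.eq.1 (hc.trans (map_one _).symm))
  obtain ⟨⟨_, y, hay, hya⟩, rfl⟩ := ha
  obtain ⟨b, rfl⟩ := Ideal.Quotient.mk_surjective y
  rw [← map_mul] at hay hya
  exact isUnit_of_isUnit_mul_of_isUnit_mul (hunit hay) (hunit hya)

theorem SpectralStatesNorming.mem_spectrum_iff_exists_character (h : SpectralStatesNorming A)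
    {a : A} {k : ℂ} : k ∈ spectrum ℂ a ↔ ∃ φ : characterSpace ℂ A, φ a = k := by
  refine ⟨fun hk => ?_, ?_⟩
  · have := isClosed_spectralStatesKernel h
    have := isTwoSided_spectralStatesKernel h
    refine exists_character_of_mem_spectrum_quotient (spectralStatesKernel h)
      (commutator_mem_spectralStatesKernel h) fun hu => hk ?_
    exact isUnit_of_isUnit_mk_spectralStatesKernel h (by rw [map_sub]; exact hu)
  · rintro ⟨φ, rfl⟩
    exact CharacterSpace.apply_mem_spectrum φ a

theorem SpectralStatesNorming.spectralStates_subset_closure_convexHull_characterSpace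
    (h : SpectralStatesNorming A) :
    spectralStates A ⊆ closure (convexHull ℝ (characterSpace ℂ A)) := by
  refine fun f hf => mem_closure_convexHull_of_forall_re_le (𝕜 := ℂ) fun l c hl => ?_
  obtain ⟨a, rfl⟩ := LinearMap.dualEmbedding_surjective (topDualPairing ℂ A) l
  refine re_apply_le_of_forall_mem_spectrum hf fun k hk => ?_
  obtain ⟨φ, rfl⟩ := h.mem_spectrum_iff_exists_character.1 hk
  exact hl φ φ.2

theorem SpectralStatesNorming.extremePoints_spectralStates_subset (h : SpectralStatesNorming A) :
    (spectralStates A).extremePoints ℝ ⊆ characterSpace ℂ A :=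
  extremePoints_subset_of_subset_closure_convexHull (E := WeakDual ℂ A)
    isCompact_spectralStates convex_spectralStates
    (isCompact_iff_compactSpace.2 inferInstance) characterSpace_subset_spectralStates
    h.spectralStates_subset_closure_convexHull_characterSpace

end Norming

section SpectralIsometry

variable {A B : Type*} [NormedRing A] [NormedAlgebra ℂ A] [CompleteSpace A]
  [NormedRing B] [NormedAlgebra ℂ B] {T : A →ₗ[ℂ] B}

theorem exists_spectralState_eq_comp (hT1 : T 1 = 1)
    (hT : ∀ a, realSpectralRadius (T a) = realSpectralRadius a) {f : WeakDual ℂ B}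
    (hf : f ∈ spectralStates B) : ∃ g ∈ spectralStates A, ∀ a, g a = f (T a) :=
  exists_mem_spectralStates_of_linearMap ((toStrongDual f).toLinearMap ∘ₗ T)
    ((congrArg f hT1).trans hf.1) fun a => hT a ▸ hf.2 (T a)

theorem SpectralStatesNorming.of_spectral_isometry (hB : SpectralStatesNorming B) (hT1 : T 1 = 1)
    (hT : ∀ a, realSpectralRadius (T a) = realSpectralRadius a) : SpectralStatesNorming A := by
  refine fun a c hc h => hT a ▸ hB (T a) c hc fun f hf => ?_
  obtain ⟨g, hg, hgf⟩ := exists_spectralState_eq_comp hT1 hT hf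
  exact hgf a ▸ h g hg

variable [CompleteSpace B]

theorem exists_spectralState_comp_eq (hT1 : T 1 = 1)
    (hT : ∀ a, realSpectralRadius (T a) = realSpectralRadius a) (hsurj : Function.Surjective T)
    {g : WeakDual ℂ A} (hg : g ∈ spectralStates A) :
    ∃ f ∈ spectralStates B, ∀ a, f (T a) = g a := by
  obtain ⟨S, hS⟩ := T.exists_rightInverse_of_surjective (LinearMap.range_eq_top.2 hsurj)
  have hTS (b : B) : T (S b) = b := LinearMap.congr_fun hS b
  have hgS (a : A) : g (S (T a)) = g a := by
    rw [← sub_eq_zero, ← map_sub, ← norm_le_zero_iff]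
    have hzero : realSpectralRadius (0 : A) ≤ 0 := by
      simpa using realSpectralRadius_le_norm_mul_norm_one (0 : A)
    calc ‖g (S (T a) - a)‖ ≤ realSpectralRadius (S (T a) - a) := hg.2 _
      _ = realSpectralRadius (0 : A) := by rw [← hT, map_sub, hTS, sub_self, ← T.map_zero, hT]
      _ ≤ 0 := hzero
  obtain ⟨f, hf, hfg⟩ := exists_mem_spectralStates_of_linearMap
    ((toStrongDual g).toLinearMap ∘ₗ S) (by rw [← hT1]; exact (hgS 1).trans hg.1)
    fun b => by simpa [← hT, hTS] using! hg.2 (S b)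
  exact ⟨f, hf, fun a => (hfg (T a)).trans (hgS a)⟩

theorem mem_extremePoints_spectralStates_of_eq_comp (hT1 : T 1 = 1)
    (hT : ∀ a, realSpectralRadius (T a) = realSpectralRadius a) (hsurj : Function.Surjective T)
    {f : WeakDual ℂ B} (hf : f ∈ (spectralStates B).extremePoints ℝ) {g : WeakDual ℂ A}
    (hg : g ∈ spectralStates A) (hgf : ∀ a, g a = f (T a)) :
    g ∈ (spectralStates A).extremePoints ℝ := by
  refine mem_extremePoints_iff_left.2 ⟨hg, fun g₁ hg₁ g₂ hg₂ ⟨s, t, hs, ht, hst, hseg⟩ => ?_⟩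
  obtain ⟨f₁, hf₁, hfg₁⟩ := exists_spectralState_comp_eq hT1 hT hsurj hg₁
  obtain ⟨f₂, hf₂, hfg₂⟩ := exists_spectralState_comp_eq hT1 hT hsurj hg₂
  have hseg' : s • f₁ + t • f₂ = f := by
    refine DFunLike.ext _ _ (hsurj.forall.2 fun a => ?_)
    change s • f₁ (T a) + t • f₂ (T a) = f (T a)
    rw [hfg₁, hfg₂, ← hgf, ← hseg]
    rfl
  have hf₁f : f₁ = f := (mem_extremePoints_iff_left.1 hf).2 f₁ hf₁ f₂ hf₂ ⟨s, t, hs, ht, hst, hseg'⟩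
  exact DFunLike.ext _ _ fun a => by rw [← hfg₁, hf₁f, hgf]

theorem SpectralStatesNorming.apply_map_mul (hB : SpectralStatesNorming B) (hT1 : T 1 = 1)
    (hT : ∀ a, realSpectralRadius (T a) = realSpectralRadius a) (hsurj : Function.Surjective T)
    {f : WeakDual ℂ B} (hf : f ∈ spectralStates B) (a b : A) : f (T (a * b)) = f (T a * T b) := by
  have hext : (spectralStates B).extremePoints ℝ ⊆ {f | f (T (a * b)) = f (T a * T b)} := by
    intro f hf
    obtain ⟨g, hg, hgf⟩ := exists_spectralState_eq_comp hT1 hT hf.1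
    have hgchar := (hB.of_spectral_isometry hT1 hT).extremePoints_spectralStates_subset
      (mem_extremePoints_spectralStates_of_eq_comp hT1 hT hsurj hf hg hgf)
    have hfchar := hB.extremePoints_spectralStates_subset hf
    calc f (T (a * b)) = g a * g b := by rw [← hgf, hgchar.2]
      _ = f (T a * T b) := by rw [hgf, hgf, hfchar.2]
  have hK : closure (convexHull ℝ ((spectralStates B).extremePoints ℝ)) = spectralStates B :=
    closure_convexHull_extremePoints (E := WeakDual ℂ B) isCompact_spectralStates
      convex_spectralStates
  rw [← hK] at hf
  refine closure_minimal (convexHull_min hext ?_)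
    (isClosed_eq (eval_continuous _) (eval_continuous _)) hf
  intro f (hf : f (T (a * b)) = f (T a * T b)) g (hg : g (T (a * b)) = g (T a * T b)) s t _ _ _
  change s • f (T (a * b)) + t • g (T (a * b)) = s • f (T a * T b) + t • g (T a * T b)
  rw [hf, hg]

theorem exists_character_eq_comp (hB : SpectralStatesNorming B) (hT1 : T 1 = 1)
    (hT : ∀ a, realSpectralRadius (T a) = realSpectralRadius a) (hsurj : Function.Surjective T)
    (χ : characterSpace ℂ B) : ∃ φ : characterSpace ℂ A, ∀ a, φ a = χ (T a) := by
  have hχ := characterSpace_subset_spectralStates χ.2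
  obtain ⟨g, hg, hgχ⟩ := exists_spectralState_eq_comp hT1 hT hχ
  refine ⟨⟨g, CharacterSpace.eq_set_map_one_map_mul.ge ⟨hg.1, fun a b => ?_⟩⟩, hgχ⟩
  calc g (a * b) = χ (T a * T b) := (hgχ _).trans (hB.apply_map_mul hT1 hT hsurj hχ a b)
    _ = g a * g b := by rw [hgχ, hgχ]; exact map_mul χ (T a) (T b)

theorem exists_character_comp_eq (hB : SpectralStatesNorming B) (hT1 : T 1 = 1)
    (hT : ∀ a, realSpectralRadius (T a) = realSpectralRadius a) (hsurj : Function.Surjective T)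
    (φ : characterSpace ℂ A) : ∃ χ : characterSpace ℂ B, ∀ a, χ (T a) = φ a := by
  obtain ⟨f, hf, hfφ⟩ :=
    exists_spectralState_comp_eq hT1 hT hsurj (characterSpace_subset_spectralStates φ.2)
  refine ⟨⟨f, CharacterSpace.eq_set_map_one_map_mul.ge ⟨hf.1, hsurj.forall₂.2 fun a b => ?_⟩⟩, hfφ⟩
  calc f (T a * T b) = φ (a * b) := (hB.apply_map_mul hT1 hT hsurj hf a b).symm.trans (hfφ _)
    _ = f (T a) * f (T b) := by rw [hfφ, hfφ]; exact map_mul φ a b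

theorem spectral_isometry_onto_commutative_preserves_spectrum_general
    (hB : SpectralStatesNorming B) (T : A →ₗ[ℂ] B) (hsurj : Function.Surjective T) (hT1 : T 1 = 1)
    (hρ : ∀ a : A, spectralRadius ℂ (T a) = spectralRadius ℂ a) (a : A) :
    spectrum ℂ (T a) = spectrum ℂ a := by
  have hT (a : A) : realSpectralRadius (T a) = realSpectralRadius a :=
    congrArg ENNReal.toReal (hρ a)
  ext k
  rw [hB.mem_spectrum_iff_exists_character,
    (hB.of_spectral_isometry hT1 hT).mem_spectrum_iff_exists_character]
  constructor
  · rintro ⟨χ, rfl⟩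
    obtain ⟨φ, hφ⟩ := exists_character_eq_comp hB hT1 hT hsurj χ
    exact ⟨φ, hφ a⟩
  · rintro ⟨φ, rfl⟩
    obtain ⟨χ, hχ⟩ := exists_character_comp_eq hB hT1 hT hsurj φ
    exact ⟨χ, hχ a⟩

end SpectralIsometry

/-- If `A` and `B` are complex unital Banach algebras with `B` commutative
and `T : A → B` is a unital linear bijection preserving the spectral radius, then `T`
preserves the spectrum. -/
theorem spectral_isometry_onto_commutative_preserves_spectrum
    {A B : Type*} [NormedRing A] [NormedAlgebra ℂ A] [CompleteSpace A]
    [NormedCommRing B] [NormedAlgebra ℂ B] [CompleteSpace B]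
    (T : A ≃ₗ[ℂ] B) (hT1 : T 1 = 1)
    (hρ : ∀ a : A, spectralRadius ℂ (T a) = spectralRadius ℂ a) :
    ∀ a : A, spectrum ℂ (T a) = spectrum ℂ a :=
  spectral_isometry_onto_commutative_preserves_spectrum_general
    (spectralStatesNorming_of_commutative B) T.toLinearMap T.surjective hT1 hρ
end

section
/- Let A and B be complex unital Banach algebras and let T : A → B be a linear bijection satisfying ρ_B(T(a)) = ρ_A(a) for every a ∈ A. Then T maps the Jacobson radical of A onto the Jacobson radical of B, i.e., T(Rad(A)) = Rad(B). -/
/-!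
The Jacobson radical of a complex Banach algebra `A` is the group of periods of its spectral radius:
`a ∈ Rad A` if and only if `ρ(x + a) = ρ(x)` for all `x`. Since this description uses only `ρ`
and addition, a spectral isometry must respect it.

An element of the radical is a period because adding it does not change spectra. Conversely, the
periods form an additive subgroup which is stable under conjugation by units and, `ρ` being upper
semicontinuous, closed; differentiating `(1 + tx) a (1 + tx)⁻¹` at `t = 0` shows that all
commutators `⁅x, a⁆` with a period `a` are periods, and periods are quasinilpotent. Let `L` be a
maximal left ideal. If `l * a ∉ L` for some `l ∈ L`, then some commutator `⁅x, a⁆` is `1` modulo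
`L` and hence has `1` in its spectrum. Otherwise right multiplication by `a` acts on the simple
module `A ⧸ L`, by Schur's lemma as a scalar, which lies in the spectrum of `a` and therefore
vanishes. Either way `a ∈ L`.
-/

open Filter Topology
open scoped ENNReal

section Jacobson

variable {R : Type*} [Ring R]

theorem isUnit_of_sub_one_mem_jacobson_bot {r : R} (hr : r - 1 ∈ (⊥ : Ideal R).jacobson) :
    IsUnit r := by
  have left_inverse {s : R} (hs : s - 1 ∈ (⊥ : Ideal R).jacobson) : ∃ t, t * s = 1 := by
    simpa [sub_eq_zero] using Ideal.exists_mul_sub_mem_of_sub_one_mem_jacobson s hs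
  obtain ⟨s, hsr⟩ := left_inverse hr
  have hs : s - 1 ∈ (⊥ : Ideal R).jacobson := by
    simpa [mul_sub, hsr] using neg_mem (Ideal.mul_mem_left _ s hr)
  obtain ⟨t, hts⟩ := left_inverse hs
  exact isUnit_iff_exists_and_exists.2 ⟨⟨s, left_inv_eq_right_inv hts hsr ▸ hts⟩, ⟨s, hsr⟩⟩

theorem isUnit_add_of_mem_jacobson_bot {u r : R} (hu : IsUnit u)
    (hr : r ∈ (⊥ : Ideal R).jacobson) : IsUnit (u + r) := by
  obtain ⟨u, rfl⟩ := hu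
  have h : IsUnit (1 + ↑u⁻¹ * r) :=
    isUnit_of_sub_one_mem_jacobson_bot (by simpa using Ideal.mul_mem_left _ (↑u⁻¹ : R) hr)
  simpa [mul_add] using u.isUnit.mul h

variable {𝕜 : Type*} [CommRing 𝕜] [Algebra 𝕜 R]

theorem spectrum_add_of_mem_jacobson_bot {r : R} (hr : r ∈ (⊥ : Ideal R).jacobson) (x : R) :
    spectrum 𝕜 (x + r) = spectrum 𝕜 x := by
  ext k
  rw [spectrum.mem_iff, spectrum.mem_iff, not_iff_not]
  constructor <;> intro h
  · simpa [sub_add_eq_sub_sub] using isUnit_add_of_mem_jacobson_bot h hr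
  · simpa [sub_add_eq_sub_sub, sub_eq_add_neg, add_assoc, add_comm] using
      isUnit_add_of_mem_jacobson_bot h (neg_mem hr)

theorem mem_spectrum_of_sub_algebraMap_mem {L : Ideal R} (hL : L ≠ ⊤) {a : R} {k : 𝕜}
    (h : a - algebraMap 𝕜 R k ∈ L) : k ∈ spectrum 𝕜 a :=
  fun hu ↦ hL (L.eq_top_of_isUnit_mem (by simpa only [neg_sub] using neg_mem h) hu)

theorem mul_mem_of_one_notMem_spectrum_lie {L : Ideal R} (hL : L.IsMaximal) {a : R}
    (ha : ∀ x : R, (1 : 𝕜) ∉ spectrum 𝕜 ⁅x, a⁆) {l : R} (hl : l ∈ L) : l * a ∈ L := by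
  by_contra hla
  obtain ⟨y, i, hi, hyi⟩ := hL.exists_inv hla
  have hlie : ⁅y * l, a⁆ - algebraMap 𝕜 R 1 = -(i + a * y * l) := by
    rw [map_one, ← hyi, Ring.lie_def]
    noncomm_ring
  refine ha (y * l) (mem_spectrum_of_sub_algebraMap_mem hL.ne_top ?_)
  exact hlie ▸ neg_mem (add_mem hi (L.mul_mem_left _ hl))

end Jacobson

section Schur

theorem exists_eq_smul_of_isSimpleModule_of_continuous {A E : Type*} [Ring A] [Algebra ℂ A]
    [NormedAddCommGroup E] [NormedSpace ℂ E] [CompleteSpace E] [Module A E] [IsScalarTower ℂ A E]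
    [IsSimpleModule A E] (f : E →ₗ[A] E) (hf : Continuous f) : ∃ k : ℂ, ∀ v, f v = k • v := by
  have : Nontrivial E := IsSimpleModule.nontrivial A E
  obtain ⟨k, hk⟩ := spectrum.nonempty (⟨f.restrictScalars ℂ, hf⟩ : E →L[ℂ] E)
  have : SMulCommClass A ℂ E := IsScalarTower.to_smulCommClass'
  refine ⟨k, fun v ↦ ?_⟩
  have hzero : k • LinearMap.id - f = 0 := (LinearMap.bijective_or_eq_zero _).resolve_left
    fun hbij ↦ hk (ContinuousLinearMap.isUnit_iff_bijective.2 hbij)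
  exact (sub_eq_zero.1 (LinearMap.congr_fun hzero v)).symm

theorem exists_sub_algebraMap_mem_of_forall_mul_mem {A : Type*} [NormedRing A] [NormedAlgebra ℂ A]
    [CompleteSpace A] {L : Ideal A} (hL : L.IsMaximal) {a : A} (ha : ∀ l ∈ L, l * a ∈ L) :
    ∃ k : ℂ, a - algebraMap ℂ A k ∈ L := by
  have : IsSimpleModule A (A ⧸ L) := isSimpleModule_iff_isCoatom.2 hL.out
  let mulRight : (A ⧸ L) →ₗ[A] (A ⧸ L) := L.mapQ L (LinearMap.toSpanSingleton A A a) ha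
  have hcont : Continuous mulRight := L.isQuotientMap_mkQL.continuous_iff.2
    (L.mkQL.continuous.comp (continuous_mul_const a))
  obtain ⟨k, hk⟩ := exists_eq_smul_of_isSimpleModule_of_continuous mulRight hcont
  refine ⟨k, (Submodule.Quotient.eq L).1 ?_⟩
  calc (Submodule.Quotient.mk a : A ⧸ L)
      = mulRight (Submodule.Quotient.mk 1) := congrArg _ (one_mul a).symm
    _ = k • Submodule.Quotient.mk 1 := hk _
    _ = Submodule.Quotient.mk (algebraMap ℂ A k) := by
      rw [Algebra.algebraMap_eq_smul_one, Submodule.Quotient.mk_smul]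

theorem mem_jacobson_bot_of_one_notMem_spectrum_lie {A : Type*} [NormedRing A] [NormedAlgebra ℂ A]
    [CompleteSpace A] {a : A} (ha : spectrum ℂ a ⊆ {0})
    (hlie : ∀ x : A, (1 : ℂ) ∉ spectrum ℂ ⁅x, a⁆) : a ∈ (⊥ : Ideal A).jacobson := by
  refine Ideal.mem_sInf.2 fun {L} ⟨_, hL⟩ ↦ ?_
  obtain ⟨k, hk⟩ := exists_sub_algebraMap_mem_of_forall_mul_mem hL
    fun _ ↦ mul_mem_of_one_notMem_spectrum_lie hL hlie
  have hk0 : k = 0 := ha (mem_spectrum_of_sub_algebraMap_mem hL.ne_top hk)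
  simpa [hk0] using hk

end Schur

section Periods

variable {G α : Type*} [AddGroup G]

/-- The group of periods of a function `f`, that is, of all `c` with `f (x + c) = f x` for
all `x`. -/
def periodAddSubgroup (f : G → α) : AddSubgroup G where
  carrier := {c | Function.Periodic f c}
  zero_mem' x := by rw [add_zero]
  add_mem' := Function.Periodic.add_period
  neg_mem' := Function.Periodic.neg

theorem mem_periodAddSubgroup {f : G → α} {c : G} :
    c ∈ periodAddSubgroup f ↔ ∀ x, f (x + c) = f x := Iff.rfl

theorem isClosed_periodAddSubgroup [TopologicalSpace G] [IsTopologicalAddGroup G] [LinearOrder α]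
    {f : G → α} (hf : UpperSemicontinuous f) : IsClosed (periodAddSubgroup f : Set G) := by
  refine isClosed_of_closure_subset fun c hc x ↦ le_antisymm ?_ ?_
  · by_contra! hlt
    have hcont : ContinuousAt (fun p ↦ x + c - p) c := by fun_prop
    have hev : ∀ᶠ p in 𝓝 c, f (x + c - p) < f (x + c) :=
      hcont.eventually (hf _ _ (by simpa using hlt))
    obtain ⟨p, hp, hper⟩ := mem_closure_iff_nhds.1 hc _ hev
    exact hp.ne (Function.Periodic.sub_eq hper _)
  · by_contra! hlt
    have hcont : ContinuousAt (fun p ↦ x + p) c := by fun_prop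
    obtain ⟨p, hp, hper⟩ := mem_closure_iff_nhds.1 hc _ (hcont.eventually (hf _ _ hlt))
    exact hp.ne (hper x)

end Periods

theorem lie_mem_of_isClosed_of_units_conj_mem {A : Type*} [NormedRing A] [NormedAlgebra ℝ A]
    [CompleteSpace A] {S : AddSubgroup A} (hS : IsClosed (S : Set A))
    (hconj : ∀ u : Aˣ, ∀ s ∈ S, ↑u * s * ↑u⁻¹ ∈ S) {a : A} (ha : a ∈ S) (x : A) : ⁅x, a⁆ ∈ S := by
  -- `S` need not be stable under real scalars, so the difference quotients of
  -- `t ↦ (1 + t • x) * a * (1 + t • x)⁻¹` are taken at `t = 1 / n`.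
  have htendsto : Tendsto (fun n : ℕ ↦ 1 + (n : ℝ)⁻¹ • x) atTop (𝓝 1) := by
    simpa using (tendsto_inv_atTop_nhds_zero_nat (𝕜 := ℝ)).smul_const x |>.const_add 1
  have hinverse : Tendsto (fun n : ℕ ↦ ⁅x, a⁆ * Ring.inverse (1 + (n : ℝ)⁻¹ • x)) atTop
      (𝓝 ⁅x, a⁆) := by
    simpa using ((NormedRing.inverse_continuousAt (1 : Aˣ)).tendsto.comp htendsto).const_mul ⁅x, a⁆
  refine hS.mem_of_tendsto hinverse ?_
  filter_upwards [eventually_ne_atTop 0,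
    htendsto.eventually (Units.isOpen.mem_nhds isUnit_one)] with n hn ⟨u, hu⟩
  have hlie : ⁅x, a⁆ = n • ⁅(u : A), a⁆ := by
    have hscale : ⁅(u : A), a⁆ = (n : ℝ)⁻¹ • ⁅x, a⁆ := by
      simp [hu, Ring.lie_def, add_mul, mul_add, smul_sub]
    rw [hscale, ← Nat.cast_smul_eq_nsmul ℝ, smul_inv_smul₀ (Nat.cast_ne_zero.2 hn)]
  have hdiff : ⁅x, a⁆ * Ring.inverse (1 + (n : ℝ)⁻¹ • x) = n • (u * a * ↑u⁻¹ - a) := by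
    rw [← hu, Ring.inverse_unit, hlie, Ring.lie_def, smul_mul_assoc, sub_mul,
      Units.mul_inv_cancel_right]
  exact hdiff ▸ S.nsmul_mem (S.sub_mem (hconj u a ha) ha) n

section SpectralRadius

theorem upperSemicontinuous_spectralRadius (𝕜 A : Type*) [NormedField 𝕜] [ProperSpace 𝕜]
    [NormedRing A] [NormedAlgebra 𝕜 A] [CompleteSpace A] :
    UpperSemicontinuous (spectralRadius 𝕜 : A → ℝ≥0∞) := by
  intro a r hr
  obtain ⟨s, has, hsr⟩ := exists_between hr
  have hball : IsOpen {k : 𝕜 | ‖k‖ₑ < s} := isOpen_lt continuous_enorm continuous_const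
  have ha : {k : 𝕜 | ‖k‖ₑ < s} ∈ 𝓝ˢ (spectrum 𝕜 a) := hball.mem_nhdsSet.2 fun k hk ↦
    (le_iSup₂ (f := fun k (_ : k ∈ spectrum 𝕜 a) ↦ ‖k‖ₑ) k hk).trans_lt has
  filter_upwards [upperHemicontinuous_spectrum 𝕜 A a _ ha] with b hb
  exact (iSup₂_le fun k hk ↦ (hball.mem_nhdsSet.1 hb hk).le).trans_lt hsr

theorem spectrum_subset_zero_of_spectralRadius_eq_zero {𝕜 A : Type*} [NormedField 𝕜] [Ring A]
    [Algebra 𝕜 A] {a : A} (ha : spectralRadius 𝕜 a = 0) : spectrum 𝕜 a ⊆ {0} := fun k hk ↦ by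
  by_contra hk0
  have hlt : spectralRadius 𝕜 a < ‖k‖₊ := by simpa [ha, pos_iff_ne_zero] using hk0
  exact hk (spectrum.mem_resolventSet_of_spectralRadius_lt hlt)

theorem units_conj_mem_periodAddSubgroup_spectralRadius {𝕜 A : Type*} [NormedField 𝕜] [Ring A]
    [Algebra 𝕜 A] (u : Aˣ) {a : A} (ha : a ∈ periodAddSubgroup (spectralRadius 𝕜 : A → ℝ≥0∞)) :
    ↑u * a * ↑u⁻¹ ∈ periodAddSubgroup (spectralRadius 𝕜 : A → ℝ≥0∞) := by
  have hconj (v : Aˣ) (y : A) : spectralRadius 𝕜 (v * y * ↑v⁻¹) = spectralRadius 𝕜 y := by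
    simp only [spectralRadius, spectrum.units_conjugate]
  intro x
  calc spectralRadius 𝕜 (x + u * a * ↑u⁻¹)
      = spectralRadius 𝕜 (u * (↑u⁻¹ * x * u + a) * ↑u⁻¹) := by simp [mul_add, add_mul, mul_assoc]
    _ = spectralRadius 𝕜 (↑u⁻¹ * x * u) := by rw [hconj, mem_periodAddSubgroup.1 ha]
    _ = spectralRadius 𝕜 x := by simpa using hconj u⁻¹ x

variable {A : Type*} [NormedRing A] [NormedAlgebra ℂ A] [CompleteSpace A]

theorem mem_jacobson_bot_iff_mem_periodAddSubgroup_spectralRadius {a : A} :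
    a ∈ (⊥ : Ideal A).jacobson ↔ a ∈ periodAddSubgroup (spectralRadius ℂ : A → ℝ≥0∞) := by
  refine ⟨fun ha x ↦ by simp only [spectralRadius, spectrum_add_of_mem_jacobson_bot ha],
    fun ha ↦ ?_⟩
  have quasinilpotent {b : A} (hb : b ∈ periodAddSubgroup (spectralRadius ℂ : A → ℝ≥0∞)) :
      spectrum ℂ b ⊆ {0} :=
    spectrum_subset_zero_of_spectralRadius_eq_zero (by simpa using mem_periodAddSubgroup.1 hb 0)
  have hlie (x : A) : ⁅x, a⁆ ∈ periodAddSubgroup (spectralRadius ℂ : A → ℝ≥0∞) :=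
    lie_mem_of_isClosed_of_units_conj_mem
      (isClosed_periodAddSubgroup (upperSemicontinuous_spectralRadius ℂ A))
      (fun u _ ↦ units_conj_mem_periodAddSubgroup_spectralRadius u) ha x
  exact mem_jacobson_bot_of_one_notMem_spectrum_lie (quasinilpotent ha)
    fun x hx ↦ one_ne_zero (quasinilpotent (hlie x) hx)

end SpectralRadius

theorem spectral_isometry_maps_radical_onto_radical_general
    {A B : Type*} [NormedRing A] [NormedAlgebra ℂ A] [CompleteSpace A]
    [NormedRing B] [NormedAlgebra ℂ B] [CompleteSpace B]
    {T : A → B} (hT : Function.Surjective T) (hT0 : T 0 = 0)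
    (hρ : ∀ x y : A, spectralRadius ℂ (T x - T y) = spectralRadius ℂ (x - y)) :
    T '' ((⊥ : Ideal A).jacobson : Set A) = ((⊥ : Ideal B).jacobson : Set B) := by
  have hmem (a : A) : T a ∈ (⊥ : Ideal B).jacobson ↔ a ∈ (⊥ : Ideal A).jacobson := by
    rw [← neg_mem_iff, ← neg_mem_iff (x := a),
      mem_jacobson_bot_iff_mem_periodAddSubgroup_spectralRadius,
      mem_jacobson_bot_iff_mem_periodAddSubgroup_spectralRadius, mem_periodAddSubgroup,
      mem_periodAddSubgroup, hT.forall]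
    refine forall_congr' fun x ↦ ?_
    have hx := hρ x 0
    rw [hT0, sub_zero, sub_zero] at hx
    rw [← sub_eq_add_neg, ← sub_eq_add_neg, hρ, hx]
  have hpreimage : T ⁻¹' ((⊥ : Ideal B).jacobson : Set B) = (⊥ : Ideal A).jacobson :=
    Set.ext hmem
  rw [← hpreimage, Set.image_preimage_eq _ hT]

/-- A linear bijection between complex unital Banach algebras preserving the
spectral radius maps the Jacobson radical onto the Jacobson radical. -/
theorem spectral_isometry_maps_radical_onto_radical
    {A B : Type*} [NormedRing A] [NormedAlgebra ℂ A] [CompleteSpace A]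
    [NormedRing B] [NormedAlgebra ℂ B] [CompleteSpace B]
    (T : A ≃ₗ[ℂ] B)
    (hρ : ∀ a : A, spectralRadius ℂ (T a) = spectralRadius ℂ a) :
    T '' ((⊥ : Ideal A).jacobson : Set A) = ((⊥ : Ideal B).jacobson : Set B) :=
  spectral_isometry_maps_radical_onto_radical_general T.surjective (map_zero T)
    fun x y ↦ by rw [← map_sub, hρ]
end

section
/- Let A and B be complex unital semisimple Banach algebras with B commutative, and let T : A → B be a unital, linear, bijective map satisfying ρ_B(T(a)) = ρ_A(a) for every a ∈ A. Then A is commutative. -/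
/-!
Composing `T` with a character of `B` gives a linear functional `φ` on `A` that is dominated by a
multiple of the spectral radius. The spectral radius is invariant under conjugation, so for fixed
`a` and `b` the entire function `z ↦ φ (exp (z • a) * b * exp (-(z • a)))` is bounded, hence
constant by Liouville; its derivative at `0` is `φ (a * b - b * a)`. Thus every character of `B`
kills `T (a * b - b * a)`, which therefore lies in the Jacobson radical of `B`.
-/

open NormedSpace WeakDual
open scoped NNReal

section SpectralRadius

theorem spectralRadius_units_conj {𝕜 A : Type*} [NormedField 𝕜] [Ring A] [Algebra 𝕜 A]
    (u : Aˣ) (a : A) : spectralRadius 𝕜 (u * a * ↑u⁻¹ : A) = spectralRadius 𝕜 a := by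
  simp only [spectralRadius, spectrum.units_conjugate]

theorem enorm_algHom_apply_le_spectralRadius {𝕜 A : Type*} [NormedField 𝕜] [Ring A] [Algebra 𝕜 A]
    (χ : A →ₐ[𝕜] 𝕜) (a : A) : ‖χ a‖ₑ ≤ spectralRadius 𝕜 a :=
  le_iSup₂_of_le (χ a) (AlgHom.apply_mem_spectrum χ a) le_rfl

variable {𝕜 A : Type*} [NormedField 𝕜] [NormedRing A] [NormedAlgebra 𝕜 A] [CompleteSpace A]

theorem spectralRadius_le_enorm_mul_enorm_one (a : A) :
    spectralRadius 𝕜 a ≤ ‖a‖ₑ * ‖(1 : A)‖ₑ := by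
  simpa [enorm_eq_nnnorm] using spectrum.spectralRadius_le_pow_nnnorm_pow_one_div 𝕜 a 0

theorem norm_le_of_enorm_le_mul_spectralRadius {F : Type*} [SeminormedAddGroup F] {C : ℝ≥0}
    {y : F} {a : A} (h : ‖y‖ₑ ≤ C * spectralRadius 𝕜 a) : ‖y‖ ≤ C * ‖(1 : A)‖ * ‖a‖ := by
  have henorm : ‖y‖ₑ ≤ C * (‖a‖ₑ * ‖(1 : A)‖ₑ) :=
    h.trans <| by gcongr; exact spectralRadius_le_enorm_mul_enorm_one a
  have hnnnorm : ‖y‖₊ ≤ C * (‖a‖₊ * ‖(1 : A)‖₊) := by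
    simpa only [enorm_eq_nnnorm, ← ENNReal.coe_mul, ENNReal.coe_le_coe] using henorm
  calc ‖y‖ ≤ C * (‖a‖ * ‖(1 : A)‖) := mod_cast hnnnorm
    _ = C * ‖(1 : A)‖ * ‖a‖ := by ring

end SpectralRadius

section ExpConj

theorem spectralRadius_exp_conj {𝕜 A : Type*} [RCLike 𝕜] [NormedRing A] [NormedAlgebra 𝕜 A]
    [CompleteSpace A] (a b : A) :
    spectralRadius 𝕜 (exp a * b * exp (-a)) = spectralRadius 𝕜 b := by
  let : NormedAlgebra ℚ A := .restrictScalars ℚ 𝕜 A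
  let := invertibleExp a
  rw [← invOf_exp a]
  exact spectralRadius_units_conj (unitOfInvertible (exp a)) b

theorem hasDerivAt_exp_smul_conj {𝕜 A : Type*} [RCLike 𝕜] [NormedRing A] [NormedAlgebra 𝕜 A]
    [CompleteSpace A] (a b : A) (t : 𝕜) :
    HasDerivAt (fun s : 𝕜 ↦ exp (s • a) * b * exp (-(s • a)))
      (exp (t • a) * (a * b - b * a) * exp (-(t • a))) t := by
  have hexp := hasDerivAt_exp_smul_const a t
  have hexp_neg : HasDerivAt (fun s : 𝕜 ↦ exp (-(s • a))) (-a * exp (-(t • a))) t := by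
    simpa only [smul_neg] using hasDerivAt_exp_smul_const' (-a) t
  exact ((hexp.mul_const b).mul hexp_neg).congr_deriv (by noncomm_ring)

variable {A F : Type*} [NormedRing A] [NormedAlgebra ℂ A] [CompleteSpace A]
  [NormedAddCommGroup F] [NormedSpace ℂ F]

theorem map_mul_comm_of_isBounded_range_exp_conj (φ : A →L[ℂ] F) {a b : A}
    (hφ : Bornology.IsBounded (Set.range fun z : ℂ ↦ φ (exp (z • a) * b * exp (-(z • a))))) :
    φ (a * b) = φ (b * a) := by
  have hderiv (z : ℂ) := φ.hasFDerivAt.comp_hasDerivAt z (hasDerivAt_exp_smul_conj a b z)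
  obtain ⟨c, hconst⟩ := Differentiable.exists_eq_const_of_bounded
    (fun z ↦ (hderiv z).differentiableAt) hφ
  have hzero : φ (a * b - b * a) = 0 := by
    simpa using (hderiv 0).unique (hconst ▸ hasDerivAt_const 0 c)
  rwa [map_sub, sub_eq_zero] at hzero

theorem map_mul_comm_of_enorm_le_mul_spectralRadius (φ : A →ₗ[ℂ] F) {C : ℝ≥0}
    (hφ : ∀ a, ‖φ a‖ₑ ≤ C * spectralRadius ℂ a) (a b : A) : φ (a * b) = φ (b * a) := by
  let φL : A →L[ℂ] F :=
    φ.mkContinuous (C * ‖(1 : A)‖) fun x ↦ norm_le_of_enorm_le_mul_spectralRadius (hφ x)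
  refine map_mul_comm_of_isBounded_range_exp_conj φL (isBounded_iff_forall_norm_le.2 ?_)
  refine ⟨C * ‖(1 : A)‖ * ‖b‖, Set.forall_mem_range.2 fun z ↦ ?_⟩
  apply norm_le_of_enorm_le_mul_spectralRadius (𝕜 := ℂ)
  rw [← spectralRadius_exp_conj (z • a) b]
  exact hφ _

end ExpConj

section Commutative

variable {A B : Type*} [NormedRing A] [NormedAlgebra ℂ A] [CompleteSpace A]
  [NormedCommRing B] [NormedAlgebra ℂ B] [CompleteSpace B]

theorem mem_jacobson_bot_of_forall_character_eq_zero {b : B}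
    (hb : ∀ χ : characterSpace ℂ B, χ b = 0) : b ∈ (⊥ : Ideal B).jacobson := by
  rw [Ideal.mem_jacobson_bot]
  intro y
  by_contra hunit
  obtain ⟨χ, hχ⟩ := CharacterSpace.exists_apply_eq_zero hunit
  simp [hb χ] at hχ

theorem map_commutator_mem_jacobson_bot_of_spectralRadius_le (T : A →ₗ[ℂ] B) {C : ℝ≥0}
    (hT : ∀ a, spectralRadius ℂ (T a) ≤ C * spectralRadius ℂ a) (x y : A) :
    T (x * y - y * x) ∈ (⊥ : Ideal B).jacobson := by
  refine mem_jacobson_bot_of_forall_character_eq_zero fun χ ↦ ?_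
  let χ' : B →ₐ[ℂ] ℂ := CharacterSpace.toAlgHom χ
  have htrace : χ' (T (x * y)) = χ' (T (y * x)) :=
    map_mul_comm_of_enorm_le_mul_spectralRadius (χ'.toLinearMap ∘ₗ T)
      (fun a ↦ (enorm_algHom_apply_le_spectralRadius χ' (T a)).trans (hT a)) x y
  rw [map_sub, map_sub]
  exact sub_eq_zero.2 htrace

theorem domain_of_spectral_isometry_onto_commutative_is_commutative_general
    (hB : (⊥ : Ideal B).jacobson = ⊥) (T : A →ₗ[ℂ] B) (hTinj : Function.Injective T) {C : ℝ≥0}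
    (hT : ∀ a, spectralRadius ℂ (T a) ≤ C * spectralRadius ℂ a) (x y : A) :
    x * y = y * x := by
  have hmem := map_commutator_mem_jacobson_bot_of_spectralRadius_le T hT x y
  rw [hB, Ideal.mem_bot, map_eq_zero_iff T hTinj] at hmem
  exact sub_eq_zero.1 hmem

end Commutative

/-- If `A` and `B` are complex unital semisimple Banach algebras with `B`
commutative and there exists a unital linear bijection `T : A → B` preserving the spectral
radius, then `A` is commutative. -/
theorem domain_of_spectral_isometry_onto_commutative_is_commutative
    {A B : Type*} [NormedRing A] [NormedAlgebra ℂ A] [CompleteSpace A]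
    [NormedCommRing B] [NormedAlgebra ℂ B] [CompleteSpace B]
    (hA : (⊥ : Ideal A).jacobson = ⊥) (hB : (⊥ : Ideal B).jacobson = ⊥)
    (T : A ≃ₗ[ℂ] B) (hT1 : T 1 = 1)
    (hρ : ∀ a : A, spectralRadius ℂ (T a) = spectralRadius ℂ a) :
    ∀ x y : A, x * y = y * x :=
  domain_of_spectral_isometry_onto_commutative_is_commutative_general hB T.toLinearMap T.injective
    (C := 1) fun a ↦ by simpa using (hρ a).le
end
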